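/- arXiv:0908.4024 — 2 statements merged into one kernel-verified Lean document; each statement's English description precedes it below -/
import Mathlib

section
/- Let K ⊆ ℂ be a number field and let f_1, …, f_d be entire functions. Assume that f_1 and f_2 are algebraically independent over K and have finite order of growth. Assume also that for each 1 ≤ i ≤ d there is a polynomial P_i ∈ K[X_1, …, X_d] such that the derivative f_i′ satisfies f_i′(z) = P_i(f_1(z), …, f_d(z)) for all z ∈ ℂ. Then the set S of w ∈ ℂ such that f_i(w) ∈ K for all 1 ≤ i ≤ d is finite. -/
/-- `|f|_R = sup_{|z|=R} |f z|`. -/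
noncomputable def SupOnCircle (f : ℂ → ℂ) (R : ℝ) : ℝ :=
  sSup ((fun z => ‖f z‖) '' {z : ℂ | ‖z‖ = R})

/-- `f` has finite order of growth: for some `ρ ≥ 0` and every `ε > 0`,
`|f|_R ≤ exp(R^(ρ+ε))` for all sufficiently large `R`. -/
def HasFiniteOrderGrowth (f : ℂ → ℂ) : Prop :=
  ∃ ρ : ℝ, 0 ≤ ρ ∧ ∀ ε > (0 : ℝ), ∃ R₀ : ℝ, ∀ R ≥ R₀,
    SupOnCircle f R ≤ Real.exp (R ^ (ρ + ε))

/-! Rescaling `f i z` to `a * f i (a ^ t * z)` for a suitable `a ∈ 𝓞 K` clears the denominators of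
the differential equations and of finitely many values, so that everything is defined over `𝓞 K`.
Siegel's lemma then provides a nonzero polynomial `A` of degree of order `√n`, with
coefficients of size `n ^ O(n)`, such that all derivatives of order less than `n` of
`F = A(f₁, f₂)` vanish at the given points `w`.

Suppose these derivatives vanish up to order `N ≥ n`. Dividing `F` by the product of the
`(z - w) ^ N` and applying the maximum principle on the circle of radius `N ^ (1 / (2ρ))` bounds
the `N`-th derivative of `F` at each `w` from above, the better the more points there are. But this
derivative is an algebraic integer whose conjugates are controlled by the differential equations,
so by Liouville's inequality it is either zero or not too small. With `2ρ(2[K : ℚ] + 1)`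
points and `n` large, it has to vanish. By induction on `N` all derivatives vanish, hence `F = 0`,
which contradicts algebraic independence. -/

open MvPolynomial NumberField

section PolynomialNorm

variable {ι κ R S : Type*} [NormedCommRing R]

/-- The `ℓ¹` norm of a polynomial over a normed ring: the sum of the norms of its
coefficients. -/
noncomputable def l1Norm (Q : MvPolynomial ι R) : ℝ :=
  ∑ μ ∈ Q.support, ‖Q.coeff μ‖

lemma l1Norm_nonneg (Q : MvPolynomial ι R) : 0 ≤ l1Norm Q :=
  Finset.sum_nonneg fun _ _ => norm_nonneg _

lemma l1Norm_eq_sum_of_support_subset {Q : MvPolynomial ι R} {s : Finset (ι →₀ ℕ)}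
    (hs : Q.support ⊆ s) : l1Norm Q = ∑ μ ∈ s, ‖Q.coeff μ‖ :=
  Finset.sum_subset hs fun μ _ hμ => by rw [notMem_support_iff.1 hμ, norm_zero]

lemma l1Norm_add_le (Q Q' : MvPolynomial ι R) : l1Norm (Q + Q') ≤ l1Norm Q + l1Norm Q' := by
  classical
  rw [l1Norm_eq_sum_of_support_subset Q.support_add,
    l1Norm_eq_sum_of_support_subset (Finset.subset_union_left (s₂ := Q'.support)),
    l1Norm_eq_sum_of_support_subset (Finset.subset_union_right (s₁ := Q.support)),
    ← Finset.sum_add_distrib]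
  exact Finset.sum_le_sum fun μ _ => by
    rw [coeff_add]
    exact norm_add_le _ _

lemma l1Norm_sum_le {α : Type*} (s : Finset α) (Q : α → MvPolynomial ι R) :
    l1Norm (∑ a ∈ s, Q a) ≤ ∑ a ∈ s, l1Norm (Q a) :=
  Finset.le_sum_of_subadditive l1Norm (by simp [l1Norm]) l1Norm_add_le s Q

lemma l1Norm_monomial_le (μ : ι →₀ ℕ) (a : R) : l1Norm (monomial μ a) ≤ ‖a‖ := by
  classical
  rw [l1Norm_eq_sum_of_support_subset support_monomial_subset]
  simp

lemma l1Norm_monomial_mul_le (μ : ι →₀ ℕ) (a : R) (Q : MvPolynomial ι R) :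
    l1Norm (monomial μ a * Q) ≤ ‖a‖ * l1Norm Q := by
  conv_lhs => rw [Q.as_sum, Finset.mul_sum]
  conv_rhs => rw [l1Norm, Finset.mul_sum]
  refine (l1Norm_sum_le _ _).trans (Finset.sum_le_sum fun ν _ => ?_)
  rw [monomial_mul]
  exact (l1Norm_monomial_le _ _).trans (norm_mul_le _ _)

lemma l1Norm_smul_le (a : R) (Q : MvPolynomial ι R) : l1Norm (a • Q) ≤ ‖a‖ * l1Norm Q := by
  rw [smul_eq_C_mul]
  exact l1Norm_monomial_mul_le 0 a Q

lemma l1Norm_rename_le (e : ι → κ) (Q : MvPolynomial ι R) : l1Norm (rename e Q) ≤ l1Norm Q := by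
  conv_lhs => rw [Q.as_sum, map_sum]
  refine (l1Norm_sum_le _ _).trans (Finset.sum_le_sum fun μ _ => ?_)
  rw [rename_monomial]
  exact l1Norm_monomial_le _ _

lemma norm_eval₂_le [NormedCommRing S] [NormOneClass S] {φ : R →+* S}
    (hφ : ∀ a, ‖φ a‖ ≤ ‖a‖) {x : ι → S} {B : ℝ} (hB : 1 ≤ B) (hx : ∀ i, ‖x i‖ ≤ B)
    {Q : MvPolynomial ι R} {n : ℕ} (hQ : Q.totalDegree ≤ n) :
    ‖eval₂ φ x Q‖ ≤ l1Norm Q * B ^ n := by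
  have hmonomial : ∀ μ ∈ Q.support, ‖∏ i ∈ μ.support, x i ^ μ i‖ ≤ B ^ n := fun μ hμ =>
    calc ‖∏ i ∈ μ.support, x i ^ μ i‖
        ≤ ∏ i ∈ μ.support, ‖x i ^ μ i‖ := Finset.norm_prod_le _ _
      _ ≤ ∏ i ∈ μ.support, B ^ μ i := by
          gcongr with i
          exact (norm_pow_le _ _).trans (pow_le_pow_left₀ (norm_nonneg _) (hx i) _)
      _ = B ^ μ.degree := by rw [Finset.prod_pow_eq_pow_sum, Finsupp.degree_apply]
      _ ≤ B ^ n := pow_le_pow_right₀ hB ((le_totalDegree hμ).trans hQ)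
  rw [eval₂_eq, l1Norm, Finset.sum_mul]
  exact (norm_sum_le _ _).trans <| Finset.sum_le_sum fun μ hμ =>
    (norm_mul_le _ _).trans <| mul_le_mul (hφ _) (hmonomial μ hμ) (norm_nonneg _) (norm_nonneg _)

variable {P : ι → MvPolynomial ι R} {t : ℕ}

lemma totalDegree_mkDerivation_le (hP : ∀ i, (P i).totalDegree ≤ t) (Q : MvPolynomial ι R) :
    (mkDerivation R P Q).totalDegree ≤ Q.totalDegree + t := by
  conv_lhs => rw [Q.as_sum, map_sum]
  refine totalDegree_finsetSum_le fun μ hμ => ?_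
  rw [mkDerivation_monomial]
  refine (totalDegree_smul_le _ _).trans (totalDegree_finsetSum_le fun i _ => ?_)
  refine (totalDegree_mul _ _).trans (add_le_add ?_ (hP i))
  refine (totalDegree_monomial_le _ _).trans ((Finsupp.degree_mono tsub_le_self).trans ?_)
  exact le_totalDegree hμ

lemma l1Norm_mkDerivation_le [NormOneClass R] {M : ℝ} (hM : 0 ≤ M)
    (hP : ∀ i, l1Norm (P i) ≤ M) {Q : MvPolynomial ι R} {n : ℕ} (hQ : Q.totalDegree ≤ n) :
    l1Norm (mkDerivation R P Q) ≤ M * n * l1Norm Q := by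
  conv_lhs => rw [Q.as_sum, map_sum]
  conv_rhs => rw [l1Norm, Finset.mul_sum]
  refine (l1Norm_sum_le _ _).trans (Finset.sum_le_sum fun μ hμ => ?_)
  have hterm (i : ι) : l1Norm (monomial (μ - .single i 1) (μ i : R) • P i) ≤ M * μ i :=
    calc l1Norm (monomial (μ - .single i 1) (μ i : R) • P i)
        ≤ ‖(μ i : R)‖ * l1Norm (P i) := l1Norm_monomial_mul_le _ _ _
      _ ≤ μ i * M := by
          gcongr
          · exact l1Norm_nonneg _
          · simpa using Nat.norm_cast_le (α := R) (μ i)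
          · exact hP i
      _ = M * μ i := mul_comm _ _
  rw [mkDerivation_monomial]
  calc _ ≤ ‖Q.coeff μ‖ * ∑ i ∈ μ.support, M * μ i :=
        (l1Norm_smul_le _ _).trans <| by
          gcongr
          exact (l1Norm_sum_le _ _).trans (Finset.sum_le_sum fun i _ => hterm i)
    _ = ‖Q.coeff μ‖ * (M * μ.degree) := by
        rw [← Finset.mul_sum, Finsupp.degree_apply, Nat.cast_sum]
    _ ≤ M * n * ‖Q.coeff μ‖ := by
        rw [mul_comm]
        gcongr
        exact le_totalDegree hμ |>.trans hQ

lemma totalDegree_iterate_mkDerivation_le (hP : ∀ i, (P i).totalDegree ≤ t)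
    (Q : MvPolynomial ι R) (k : ℕ) :
    ((mkDerivation R P)^[k] Q).totalDegree ≤ Q.totalDegree + k * t := by
  induction k with
  | zero => simp
  | succ k ih =>
    rw [Function.iterate_succ_apply']
    exact (totalDegree_mkDerivation_le hP _).trans (by linarith)

lemma l1Norm_iterate_mkDerivation_le [NormOneClass R] {M : ℝ} (hM : 0 ≤ M)
    (hPt : ∀ i, (P i).totalDegree ≤ t) (hPM : ∀ i, l1Norm (P i) ≤ M)
    {Q : MvPolynomial ι R} {n : ℕ} {k : ℕ} (hQ : Q.totalDegree + k * t ≤ n) :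
    l1Norm ((mkDerivation R P)^[k] Q) ≤ (M * n) ^ k * l1Norm Q := by
  induction k with
  | zero => simp
  | succ k ih =>
    have hk : Q.totalDegree + k * t ≤ n := by linarith
    rw [Function.iterate_succ_apply', pow_succ', mul_assoc (M * n)]
    refine (l1Norm_mkDerivation_le hM hPM
      ((totalDegree_iterate_mkDerivation_le hPt Q k).trans hk)).trans ?_
    gcongr
    exact ih hk

lemma exists_norm_eval_iterate_mkDerivation_le [NormOneClass R] [Finite ι] {α : Type*} [Finite α]
    (P : ι → MvPolynomial ι R) (x : α → ι → R) :
    ∃ C : ℝ, 1 ≤ C ∧ ∀ (a : α) (Q : MvPolynomial ι R) (n k : ℕ), Q.totalDegree ≤ 2 * n → k ≤ n →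
      0 < n → ‖eval (x a) ((mkDerivation R P)^[k] Q)‖ ≤ C ^ n * n ^ n * l1Norm Q := by
  obtain ⟨t, ht⟩ := Finite.exists_le fun i => (P i).totalDegree
  obtain ⟨M, hM⟩ := Finite.exists_le fun o : Option ι => o.elim 1 fun i => l1Norm (P i)
  obtain ⟨B, hB⟩ := Finite.exists_le fun o : Option (α × ι) => o.elim 1 fun q => ‖x q.1 q.2‖
  have hM1 : 1 ≤ M := hM none
  have hB1 : 1 ≤ B := hB none
  have ht1 : (1 : ℝ) ≤ t + 2 := by linarith [t.cast_nonneg (α := ℝ)]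
  refine ⟨M * (t + 2) * B ^ (t + 2),
    one_le_mul_of_one_le_of_one_le (one_le_mul_of_one_le_of_one_le hM1 ht1) (one_le_pow₀ hB1),
    fun a Q n k hQ hk hn => ?_⟩
  have hdeg : Q.totalDegree + k * t ≤ (t + 2) * n := by nlinarith
  have hbase : 1 ≤ M * ((t + 2 : ℕ) * n : ℕ) := one_le_mul_of_one_le_of_one_le hM1
    (by exact_mod_cast Nat.mul_pos (by positivity : 0 < t + 2) hn)
  calc ‖eval (x a) ((mkDerivation R P)^[k] Q)‖
      ≤ l1Norm ((mkDerivation R P)^[k] Q) * B ^ ((t + 2) * n) :=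
        norm_eval₂_le (fun _ => le_rfl) hB1 (fun i => hB (some (a, i)))
          ((totalDegree_iterate_mkDerivation_le ht Q k).trans hdeg)
    _ ≤ (M * ((t + 2) * n : ℕ)) ^ n * l1Norm Q * B ^ ((t + 2) * n) := by
        gcongr
        refine (l1Norm_iterate_mkDerivation_le (zero_le_one.trans hM1) ht
          (fun i => hM (some i)) hdeg).trans ?_
        gcongr
        exact l1Norm_nonneg Q
    _ = (M * (t + 2) * B ^ (t + 2)) ^ n * n ^ n * l1Norm Q := by
        push_cast
        simp only [mul_pow, pow_mul]
        ring

end PolynomialNorm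

section Derivative

lemma aeval_pi_apply {ι R X A : Type*} [CommSemiring R] [CommSemiring A] [Algebra R A]
    (f : ι → X → A) (Q : MvPolynomial ι R) (z : X) :
    aeval f Q z = aeval (fun i => f i z) Q :=
  DFunLike.congr_fun (comp_aeval f (Pi.evalAlgHom R (fun _ => A) z)) Q

variable {ι R 𝕜 : Type*} [CommRing R] [NontriviallyNormedField 𝕜] [Algebra R 𝕜]
  {f : ι → 𝕜 → 𝕜} {P : ι → MvPolynomial ι R}

lemma hasDerivAt_aeval (hf : ∀ i z, HasDerivAt (f i) (aeval f (P i) z) z)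
    (Q : MvPolynomial ι R) (z : 𝕜) :
    HasDerivAt (aeval f Q) (aeval f (mkDerivation R P Q) z) z := by
  induction Q using MvPolynomial.induction_on with
  | C a =>
    simpa [Pi.algebraMap_def] using hasDerivAt_const z (algebraMap R 𝕜 a)
  | add Q Q' hQ hQ' => simpa using hQ.add hQ'
  | mul_X Q i hQ =>
    simpa [add_comm, mul_comm] using hQ.mul (hf i z)

lemma differentiable_aeval (hf : ∀ i z, HasDerivAt (f i) (aeval f (P i) z) z)
    (Q : MvPolynomial ι R) : Differentiable 𝕜 (aeval f Q) :=
  fun z => (hasDerivAt_aeval hf Q z).differentiableAt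

lemma iteratedDeriv_aeval (hf : ∀ i z, HasDerivAt (f i) (aeval f (P i) z) z)
    (Q : MvPolynomial ι R) (k : ℕ) :
    iteratedDeriv k (aeval f Q) = aeval f ((mkDerivation R P)^[k] Q) := by
  induction k generalizing Q with
  | zero => simp
  | succ k ih =>
    rw [iteratedDeriv_succ', deriv_eq (hasDerivAt_aeval hf Q), ih, Function.iterate_succ_apply]

lemma iteratedDeriv_aeval_eq_algebraMap (hf : ∀ i z, HasDerivAt (f i) (aeval f (P i) z) z)
    {w : 𝕜} {x : ι → R} (hx : ∀ i, f i w = algebraMap R 𝕜 (x i)) (Q : MvPolynomial ι R) (k : ℕ) :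
    iteratedDeriv k (aeval f Q) w = algebraMap R 𝕜 (eval x ((mkDerivation R P)^[k] Q)) := by
  rw [iteratedDeriv_aeval hf, aeval_pi_apply, funext hx]
  exact aeval_algebraMap_apply 𝕜 x _

end Derivative

section Growth

variable {f : ℂ → ℂ}

lemma norm_le_supOnCircle (hf : Continuous f) (z : ℂ) : ‖f z‖ ≤ SupOnCircle f ‖z‖ := by
  refine le_csSup ?_ ⟨z, rfl, rfl⟩
  have hcompact : IsCompact {w : ℂ | ‖w‖ = ‖z‖} := by
    simpa [Metric.sphere, dist_zero_right] using isCompact_sphere (0 : ℂ) ‖z‖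
  exact (hcompact.image hf.norm).bddAbove

/-- `f` has order at most `ρ` and finite type with respect to `ρ`; in contrast to an order of
growth at most `ρ`, no `ε` is added to the exponent, which is a natural number. -/
def HasFiniteTypeGrowth (f : ℂ → ℂ) (ρ : ℕ) : Prop :=
  ∃ C : ℝ, 0 ≤ C ∧ ∀ z, ‖f z‖ ≤ Real.exp (C * (1 + ‖z‖ ^ ρ))

lemma HasFiniteOrderGrowth.eventually_hasFiniteTypeGrowth (h : HasFiniteOrderGrowth f)
    (hf : Continuous f) : ∀ᶠ ρ : ℕ in Filter.atTop, HasFiniteTypeGrowth f ρ := by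
  obtain ⟨ρ₀, -, h⟩ := h
  obtain ⟨R₀, hR₀⟩ := h 1 one_pos
  obtain ⟨M, hM⟩ := (isCompact_closedBall (0 : ℂ) (max R₀ 1)).exists_bound_of_continuousOn
    hf.continuousOn
  have hM0 : 0 ≤ M := (norm_nonneg _).trans (hM 0 (by simp))
  filter_upwards [Filter.eventually_ge_atTop ⌈ρ₀ + 1⌉₊] with ρ hρ
  refine ⟨M + 1, by positivity, fun z => ?_⟩
  have hz : 0 ≤ ‖z‖ ^ ρ := by positivity
  rcases le_total ‖z‖ (max R₀ 1) with hsmall | hlarge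
  · calc ‖f z‖ ≤ M := hM z (mem_closedBall_zero_iff.2 hsmall)
      _ ≤ (M + 1) * (1 + ‖z‖ ^ ρ) := by nlinarith
      _ ≤ Real.exp ((M + 1) * (1 + ‖z‖ ^ ρ)) := (lt_add_one _).le.trans (Real.add_one_le_exp _)
  · obtain ⟨hzR₀, hz1⟩ := max_le_iff.1 hlarge
    calc ‖f z‖ ≤ Real.exp (‖z‖ ^ (ρ₀ + 1)) := (norm_le_supOnCircle hf z).trans (hR₀ _ hzR₀)
      _ ≤ Real.exp (‖z‖ ^ (ρ : ℝ)) := Real.exp_le_exp.2 <|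
          Real.rpow_le_rpow_of_exponent_le hz1 ((Nat.le_ceil _).trans (by exact_mod_cast hρ))
      _ ≤ Real.exp ((M + 1) * (1 + ‖z‖ ^ ρ)) := by
          rw [Real.rpow_natCast, Real.exp_le_exp]
          nlinarith

lemma HasFiniteTypeGrowth.const_mul_comp_const_mul {ρ : ℕ} (h : HasFiniteTypeGrowth f ρ)
    (a b : ℂ) : HasFiniteTypeGrowth (fun z => a * f (b * z)) ρ := by
  obtain ⟨C, hC, h⟩ := h
  refine ⟨‖a‖ + C * (1 + ‖b‖ ^ ρ), by positivity, fun z => ?_⟩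
  calc ‖a * f (b * z)‖ ≤ Real.exp ‖a‖ * Real.exp (C * (1 + ‖b * z‖ ^ ρ)) := by
        rw [norm_mul]
        gcongr
        · linarith [Real.add_one_le_exp ‖a‖]
        · exact h _
    _ = Real.exp (‖a‖ + C * (1 + ‖b‖ ^ ρ * ‖z‖ ^ ρ)) := by
        rw [← Real.exp_add, norm_mul, mul_pow]
    _ ≤ Real.exp ((‖a‖ + C * (1 + ‖b‖ ^ ρ)) * (1 + ‖z‖ ^ ρ)) := by
        have h₁ : 0 ≤ ‖a‖ * ‖z‖ ^ ρ := by positivity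
        have h₂ : 0 ≤ C * ‖b‖ ^ ρ := by positivity
        have h₃ : 0 ≤ C * ‖z‖ ^ ρ := by positivity
        gcongr
        linarith

end Growth

section Schwarz

variable {F : ℂ → ℂ} {W : Finset ℂ} {w : ℂ} {N : ℕ}

lemma eq_zero_of_forall_iteratedDeriv_eq_zero (hF : Differentiable ℂ F)
    (h : ∀ k, iteratedDeriv k F w = 0) : F = 0 := by
  have htop : analyticOrderAt F w = ⊤ := ENat.eq_top_iff_forall_ge.2 fun n =>
    (natCast_le_analyticOrderAt_iff_iteratedDeriv_eq_zero (hF.analyticAt w)).2 fun i _ => h i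
  exact AnalyticOnNhd.eq_of_eventuallyEq (fun z _ => hF.analyticAt z) (fun z _ => analyticAt_const)
    (analyticOrderAt_eq_top.1 htop)

lemma exists_eq_sub_pow_mul (hF : Differentiable ℂ F) (h : N ≤ analyticOrderAt F w) :
    ∃ G : ℂ → ℂ, Differentiable ℂ G ∧ F = (· - w) ^ N * G := by
  induction N generalizing F with
  | zero => exact ⟨F, hF, by simp⟩
  | succ N ih =>
    have hFw : F w = 0 := apply_eq_zero_of_analyticOrderAt_ne_zero fun h0 => by simp [h0] at h
    have hG : Differentiable ℂ (dslope F w) := by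
      rw [← differentiableOn_univ, Complex.differentiableOn_dslope Filter.univ_mem]
      exact hF.differentiableOn
    have hfac : F = (· - w) ^ 1 * dslope F w := by
      ext z
      simpa [hFw] using (sub_smul_dslope F w z).symm
    rw [hfac, analyticOrderAt_mul (by fun_prop) (hG.analyticAt w),
      analyticOrderAt_centeredMonomial, Nat.cast_add, add_comm,
      ENat.add_le_add_iff_left (by simp)] at h
    obtain ⟨H, hH, hGH⟩ := ih hG h
    exact ⟨H, hH, by rw [hfac, hGH, ← mul_assoc, ← pow_add, add_comm]⟩

lemma exists_eq_prod_sub_pow_mul (hF : Differentiable ℂ F)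
    (h : ∀ w ∈ W, N ≤ analyticOrderAt F w) :
    ∃ G : ℂ → ℂ, Differentiable ℂ G ∧ ∀ z, F z = (∏ w ∈ W, (z - w) ^ N) * G z := by
  classical
  induction W using Finset.induction_on generalizing F with
  | empty => exact ⟨F, hF, by simp⟩
  | insert v W hv ih =>
    obtain ⟨G, hG, hFG⟩ := exists_eq_sub_pow_mul hF (h v (Finset.mem_insert_self _ _))
    obtain ⟨H, hH, hGH⟩ := ih hG fun w hw => by
      have hvw : ((· - v) ^ N : ℂ → ℂ) w ≠ 0 :=
        pow_ne_zero _ (sub_ne_zero.2 fun e => hv (e ▸ hw))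
      have hwN := h w (Finset.mem_insert_of_mem hw)
      rwa [hFG, analyticOrderAt_mul (by fun_prop) (hG.analyticAt w),
        analyticOrderAt_eq_zero.2 (Or.inr hvw), zero_add] at hwN
    refine ⟨H, hH, fun z => ?_⟩
    rw [hFG, Finset.prod_insert hv, mul_assoc, ← hGH]
    rfl

variable {T R B : ℝ}

lemma norm_le_of_forall_iteratedDeriv_eq_zero (hF : Differentiable ℂ F)
    (h : ∀ w ∈ W, ∀ k < N, iteratedDeriv k F w = 0) (hR0 : 0 < R) (hWT : ∀ w ∈ W, ‖w‖ ≤ T)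
    (hTR : 2 * T ≤ R) (hB : ∀ z, ‖z‖ = R → ‖F z‖ ≤ B) {z : ℂ} (hz : ‖z‖ ≤ R) :
    ‖F z‖ ≤ (‖z‖ + T) ^ (N * W.card) * (B / (R / 2) ^ (N * W.card)) := by
  obtain ⟨G, hG, hFG⟩ := exists_eq_prod_sub_pow_mul hF fun w hw =>
    (natCast_le_analyticOrderAt_iff_iteratedDeriv_eq_zero (hF.analyticAt w)).2 (h w hw)
  have hGR : ∀ u, ‖u‖ = R → ‖G u‖ ≤ B / (R / 2) ^ (N * W.card) := fun u hu => by
    have hprod : (R / 2) ^ (N * W.card) ≤ ∏ w ∈ W, ‖u - w‖ ^ N := by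
      rw [pow_mul, ← Finset.prod_const]
      refine Finset.prod_le_prod (fun _ _ => by positivity) fun w hw => ?_
      gcongr
      linarith [hWT w hw, norm_sub_norm_le u w]
    rw [le_div_iff₀' (by positivity)]
    calc (R / 2) ^ (N * W.card) * ‖G u‖ ≤ (∏ w ∈ W, ‖u - w‖ ^ N) * ‖G u‖ := by gcongr
      _ = ‖F u‖ := by simp only [hFG, norm_mul, norm_prod, norm_pow]
      _ ≤ B := hB u hu
  have hGz : ‖G z‖ ≤ B / (R / 2) ^ (N * W.card) :=
    Complex.norm_le_of_forall_mem_frontier_norm_le (U := Metric.ball 0 R)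
      Metric.isBounded_ball hG.diffContOnCl
      (fun u hu => hGR u (by simpa [frontier_ball _ hR0.ne'] using hu))
      (by simpa [closure_ball _ hR0.ne'] using hz)
  have hprod : ∏ w ∈ W, ‖z - w‖ ^ N ≤ (‖z‖ + T) ^ (N * W.card) := by
    rw [pow_mul, ← Finset.prod_const]
    refine Finset.prod_le_prod (fun _ _ => by positivity) fun w hw => ?_
    gcongr
    linarith [norm_sub_le z w, hWT w hw]
  simp only [hFG, norm_mul, norm_prod, norm_pow]
  exact mul_le_mul hprod hGz (norm_nonneg _) (hprod.trans' <| by positivity)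

lemma norm_iteratedDeriv_le_of_forall_iteratedDeriv_eq_zero (hF : Differentiable ℂ F)
    (h : ∀ w ∈ W, ∀ k < N, iteratedDeriv k F w = 0) (hT : 1 ≤ T) (hWT : ∀ w ∈ W, ‖w‖ ≤ T)
    (hTR : 2 * T ≤ R) (hB : ∀ z, ‖z‖ = R → ‖F z‖ ≤ B) (hw : w ∈ W) :
    ‖iteratedDeriv N F w‖ ≤
      N.factorial * ((2 * T + 1) ^ (N * W.card) * (B / (R / 2) ^ (N * W.card))) := by
  have hB0 : 0 ≤ B := (norm_nonneg _).trans (hB R (by simp; linarith))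
  have hR0 : 0 < R := by linarith
  have hsphere : ∀ z ∈ Metric.sphere w 1,
      ‖F z‖ ≤ (2 * T + 1) ^ (N * W.card) * (B / (R / 2) ^ (N * W.card)) := fun z hz => by
    have hzT : ‖z‖ ≤ T + 1 := by
      linarith [hWT w hw, norm_sub_norm_le z w, mem_sphere_iff_norm.1 hz]
    refine (norm_le_of_forall_iteratedDeriv_eq_zero hF h hR0 hWT hTR hB
      (by linarith)).trans ?_
    gcongr ?_ ^ _ * _
    linarith
  simpa using Complex.norm_iteratedDeriv_le_of_forall_mem_sphere_norm_le N one_pos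
    hF.diffContOnCl hsphere

lemma norm_iteratedDeriv_mul_pow_le {ρ q : ℕ} {C : ℝ} (hF : Differentiable ℂ F)
    (h : ∀ w ∈ W, ∀ k < N, iteratedDeriv k F w = 0) (hT : 1 ≤ T) (hWT : ∀ w ∈ W, ‖w‖ ≤ T)
    (hTR : 2 * T ≤ R) (hRN : R ^ (2 * ρ) = N) (hW : 2 * ρ * q ≤ W.card)
    (hC : 0 ≤ C) (hFR : ∀ z, ‖z‖ = R → ‖F z‖ ≤ C ^ N * N ^ N) (hw : w ∈ W) :
    ‖iteratedDeriv N F w‖ * (N : ℝ) ^ (q * N) ≤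
      (((2 * T + 1) * 2) ^ W.card * C) ^ N * N ^ (2 * N) := by
  have hR0 : 0 < R := by linarith
  have hNR : (N : ℝ) ^ (q * N) ≤ R ^ (N * W.card) := by
    rw [← hRN, ← pow_mul]
    exact pow_le_pow_right₀ (by linarith) (by nlinarith)
  have hfact : (N.factorial : ℝ) ≤ (N : ℝ) ^ N := by exact_mod_cast Nat.factorial_le_pow N
  calc ‖iteratedDeriv N F w‖ * (N : ℝ) ^ (q * N)
      ≤ (N : ℝ) ^ N * ((2 * T + 1) ^ (N * W.card) * (C ^ N * N ^ N / (R / 2) ^ (N * W.card))) *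
          R ^ (N * W.card) := by
        gcongr
        refine (norm_iteratedDeriv_le_of_forall_iteratedDeriv_eq_zero hF h hT hWT hTR hFR
          hw).trans ?_
        gcongr
    _ = (N : ℝ) ^ N * ((2 * T + 1) ^ (N * W.card) * (C ^ N * N ^ N * 2 ^ (N * W.card))) := by
        rw [div_pow]
        field_simp
    _ = (((2 * T + 1) * 2) ^ W.card * C) ^ N * N ^ (2 * N) := by
        rw [mul_pow _ C, ← pow_mul, mul_comm W.card N, mul_pow (2 * T + 1)]
        ring

end Schwarz

section RingOfIntegers

variable {K : Type*} [Field K] [NumberField K]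

/-- The house (the largest absolute value of the conjugates) as a norm on the ring of integers of
a number field. -/
@[reducible] noncomputable def houseNormedCommRing (K : Type*) [Field K] [NumberField K] :
    NormedCommRing (𝓞 K) :=
  .induced (𝓞 K) ((K →+* ℂ) → ℂ) ((canonicalEmbedding K).comp (algebraMap (𝓞 K) K))
    ((canonicalEmbedding_injective K).comp RingOfIntegers.coe_injective)

attribute [local instance] houseNormedCommRing

local instance houseNormOneClass : NormOneClass (𝓞 K) where
  norm_one := show house ((1 : 𝓞 K) : K) = 1 by simp [house]

lemma norm_algebraMap_le_norm [Algebra K ℂ] (a : 𝓞 K) : ‖algebraMap (𝓞 K) ℂ a‖ ≤ ‖a‖ :=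
  norm_embedding_le_house (a : K) (algebraMap K ℂ)

/-- Liouville's inequality: all conjugates enter the norm, which is a nonzero integer. -/
lemma one_le_norm_mul_norm_pow [Algebra K ℂ] {a : 𝓞 K} (ha : a ≠ 0) :
    1 ≤ ‖algebraMap (𝓞 K) ℂ a‖ * ‖a‖ ^ (Module.finrank ℚ K - 1) := by
  refine le_trans ?_ (norm_norm_le_norm_mul_house_pow (a : K) (algebraMap K ℂ))
  rw [← Algebra.coe_norm_int, ← Rat.norm_cast_real, Rat.cast_intCast, Real.norm_eq_abs]
  exact_mod_cast Int.one_le_abs (Algebra.norm_ne_zero_iff.2 ha)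

variable (K) in
lemma exists_ne_zero_mulVec_eq_zero_norm_le : ∃ c : ℝ, 1 ≤ c ∧
    ∀ (α β : Type*) [Fintype α] [Fintype β] (a : Matrix α β (𝓞 K)) (H : ℝ),
      0 < Fintype.card α → Fintype.card β = 2 * Fintype.card α → 1 ≤ H → (∀ k l, ‖a k l‖ ≤ H) →
      ∃ ξ : β → 𝓞 K, ξ ≠ 0 ∧ a.mulVec ξ = 0 ∧ ∀ l, ‖ξ l‖ ≤ c * Fintype.card β * H := by
  classical
  obtain ⟨c, hc⟩ : ∃ c : ℝ, ∀ (α β : Type _) [Fintype α] [Fintype β] (a : Matrix α β (𝓞 K))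
      (H : ℝ), a ≠ 0 → 0 < Fintype.card α → Fintype.card α < Fintype.card β →
      (∀ k l, ‖a k l‖ ≤ H) → ∃ ξ : β → 𝓞 K, ξ ≠ 0 ∧ a.mulVec ξ = 0 ∧ ∀ l, ‖ξ l‖ ≤
        c * ((c * Fintype.card β * H) ^
          ((Fintype.card α : ℝ) / ((Fintype.card β : ℝ) - (Fintype.card α : ℝ)))) :=
    ⟨_, fun α β _ _ a H ha h0 h1 h2 =>
      NumberField.house.exists_ne_zero_int_vec_house_le K a ha h0 h1 rfl h2 rfl⟩
  refine ⟨c * c + 1, by nlinarith, fun α β _ _ a H hα hβ hH ha => ?_⟩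
  have hβ1 : (1 : ℝ) ≤ Fintype.card β := by exact_mod_cast (by omega : 1 ≤ Fintype.card β)
  have hcβ : (1 : ℝ) ≤ (c * c + 1) * Fintype.card β * H :=
    one_le_mul_of_one_le_of_one_le (one_le_mul_of_one_le_of_one_le (by nlinarith) hβ1) hH
  rcases eq_or_ne a 0 with rfl | ha0
  · have : Nonempty β := Fintype.card_pos_iff.1 (by omega)
    exact ⟨1, one_ne_zero, Matrix.zero_mulVec _, fun _ => norm_one.trans_le hcβ⟩
  obtain ⟨ξ, hξ0, hξ, hξH⟩ := hc α β a H ha0 hα (by omega) ha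
  refine ⟨ξ, hξ0, hξ, fun l => ?_⟩
  have hexp : (Fintype.card α : ℝ) / ((Fintype.card β : ℝ) - Fintype.card α) = 1 := by
    rw [hβ]
    push_cast
    field_simp
    ring
  calc ‖ξ l‖ ≤ c * (c * Fintype.card β * H) := by simpa only [hexp, Real.rpow_one] using hξH l
    _ ≤ (c * c + 1) * Fintype.card β * H := by nlinarith

variable (K) in
lemma exists_ne_zero_forall_linearMap_eq_zero_l1Norm_le (κ : Type*) : ∃ c : ℝ, 1 ≤ c ∧
    ∀ (α : Type*) [Finite α] [Nonempty α] (Λ : α → MvPolynomial κ (𝓞 K) →ₗ[𝓞 K] 𝓞 K)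
      (M : Finset (κ →₀ ℕ)) (H : ℝ), M.card = 2 * Nat.card α → 1 ≤ H →
      (∀ a, ∀ μ ∈ M, ‖Λ a (monomial μ 1)‖ ≤ H) →
      ∃ A ≠ 0, A.support ⊆ M ∧ (∀ a, Λ a A = 0) ∧ l1Norm A ≤ c * M.card ^ 2 * H := by
  classical
  obtain ⟨c, hc1, hc⟩ := exists_ne_zero_mulVec_eq_zero_norm_le K
  refine ⟨c, hc1, fun α _ _ Λ M H hM hH hΛ => ?_⟩
  have := Fintype.ofFinite α
  have hcard : Fintype.card M = 2 * Fintype.card α := by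
    rwa [Fintype.card_coe, ← Nat.card_eq_fintype_card]
  let B : Matrix α M (𝓞 K) := .of fun a μ => Λ a (monomial μ 1)
  obtain ⟨ξ, hξ0, hξ, hξH⟩ := hc α M B H Fintype.card_pos hcard hH fun a μ => hΛ a μ μ.2
  have hcoeff (μ : M) : (∑ ν : M, monomial (ν : κ →₀ ℕ) (ξ ν)).coeff (μ : κ →₀ ℕ) = ξ μ := by
    simp [coeff_sum, coeff_monomial]
  refine ⟨∑ μ : M, monomial (μ : κ →₀ ℕ) (ξ μ), ?_, ?_, fun a => ?_, ?_⟩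
  · intro h
    exact hξ0 (funext fun μ => by rw [← hcoeff, h, coeff_zero, Pi.zero_apply])
  · exact support_sum.trans <| Finset.biUnion_subset.2 fun μ _ =>
      support_monomial_subset.trans (Finset.singleton_subset_iff.2 μ.2)
  · have hsmul (μ : M) : monomial (μ : κ →₀ ℕ) (ξ μ) = ξ μ • monomial (μ : κ →₀ ℕ) 1 := by
      rw [smul_monomial, smul_eq_mul, mul_one]
    refine Eq.trans ?_ (congrFun hξ a)
    rw [map_sum]
    exact Finset.sum_congr rfl fun μ _ => by rw [hsmul, map_smul, smul_eq_mul, mul_comm]; rfl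
  · calc l1Norm (∑ μ : M, monomial (μ : κ →₀ ℕ) (ξ μ)) ≤ ∑ _μ : M, c * M.card * H :=
          (l1Norm_sum_le _ _).trans <| Finset.sum_le_sum fun _ _ =>
            (l1Norm_monomial_le _ _).trans <| by simpa using hξH _
      _ = c * M.card ^ 2 * H := by
          rw [Finset.sum_const, Finset.card_univ, Fintype.card_coe, nsmul_eq_mul]
          ring

lemma exists_ne_zero_forall_eval_iterate_mkDerivation_rename_eq_zero {ι κ α : Type*} [Finite ι]
    [Finite α] [Nonempty α] (P : ι → MvPolynomial ι (𝓞 K)) (x : α → ι → 𝓞 K) (e : κ → ι) :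
    ∃ C : ℝ, 1 ≤ C ∧ ∀ (n : ℕ) (M : Finset (κ →₀ ℕ)), 0 < n → M.card = 2 * (Nat.card α * n) →
      (∀ μ ∈ M, μ.degree ≤ 2 * n) → ∃ A : MvPolynomial κ (𝓞 K), A ≠ 0 ∧ A.support ⊆ M ∧
        (∀ a, ∀ k < n, eval (x a) ((mkDerivation (𝓞 K) P)^[k] (rename e A)) = 0) ∧
        l1Norm A ≤ C ^ n * n ^ n := by
  obtain ⟨c, hc1, hc⟩ := exists_ne_zero_forall_linearMap_eq_zero_l1Norm_le K κ
  obtain ⟨C, hC1, hC⟩ := exists_norm_eval_iterate_mkDerivation_le P x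
  have hα : (1 : ℝ) ≤ Nat.card α := by exact_mod_cast Nat.card_pos (α := α)
  have hcα : 1 ≤ c * (2 * Nat.card α) ^ 2 := by nlinarith
  refine ⟨4 * (c * (2 * Nat.card α) ^ 2) * C,
    one_le_mul_of_one_le_of_one_le (by linarith) hC1, fun n M hn hM hdeg => ?_⟩
  have : Nonempty (Fin n) := ⟨⟨0, hn⟩⟩
  let Λ (q : α × Fin n) : MvPolynomial κ (𝓞 K) →ₗ[𝓞 K] 𝓞 K :=
    (aeval (x q.1)).toLinearMap ∘ₗ ((mkDerivation (𝓞 K) P).toLinearMap ^ q.2.1) ∘ₗ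
      (rename e).toLinearMap
  have hΛ (q : α × Fin n) (A : MvPolynomial κ (𝓞 K)) :
      Λ q A = eval (x q.1) ((mkDerivation (𝓞 K) P)^[q.2] (rename e A)) := by
    simp [Λ, Module.End.pow_apply, aeval_eq_eval]
  have hΛM (q : α × Fin n) : ∀ μ ∈ M, ‖Λ q (monomial μ 1)‖ ≤ C ^ n * n ^ n := fun μ hμ => by
    have hμdeg : (rename e (monomial μ (1 : 𝓞 K))).totalDegree ≤ 2 * n :=
      (totalDegree_rename_le _ _).trans ((totalDegree_monomial_le _ _).trans (hdeg μ hμ))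
    have hμnorm : l1Norm (rename e (monomial μ (1 : 𝓞 K))) ≤ 1 :=
      (l1Norm_rename_le _ _).trans ((l1Norm_monomial_le _ _).trans_eq norm_one)
    rw [hΛ]
    exact (hC q.1 _ n q.2 hμdeg q.2.2.le hn).trans (mul_le_of_le_one_right (by positivity) hμnorm)
  obtain ⟨A, hA0, hAM, hΛA, hA⟩ := hc (α × Fin n) Λ M (C ^ n * n ^ n)
    (by rw [hM, Nat.card_prod, Nat.card_fin])
    (one_le_mul_of_one_le_of_one_le (one_le_pow₀ hC1) (one_le_pow₀ (by exact_mod_cast hn))) hΛM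
  refine ⟨A, hA0, hAM, fun a k hk => (hΛ (a, ⟨k, hk⟩) A).symm.trans (hΛA _), hA.trans ?_⟩
  have hsq : (n : ℝ) ^ 2 ≤ 4 ^ n :=
    calc (n : ℝ) ^ 2 ≤ (2 ^ n) ^ 2 := by gcongr; exact_mod_cast n.lt_two_pow_self.le
      _ = 4 ^ n := by rw [← pow_mul, mul_comm, pow_mul]; norm_num
  calc c * M.card ^ 2 * (C ^ n * n ^ n)
      = c * (2 * Nat.card α) ^ 2 * n ^ 2 * (C ^ n * n ^ n) := by
        rw [hM]
        push_cast
        ring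
    _ ≤ (c * (2 * Nat.card α) ^ 2) ^ n * 4 ^ n * (C ^ n * n ^ n) := by
        gcongr
        exact le_self_pow₀ hcα hn.ne'
    _ = (4 * (c * (2 * Nat.card α) ^ 2) * C) ^ n * n ^ n := by
        simp only [mul_pow]
        ring

lemma exists_auxiliary_polynomial {ι α : Type*} [Finite ι] [Finite α] [Nonempty α]
    (P : ι → MvPolynomial ι (𝓞 K)) (x : α → ι → 𝓞 K) (e : Fin 2 → ι) : ∃ C : ℝ, 1 ≤ C ∧
      ∀ s n : ℕ, 0 < s → n = 2 * Nat.card α * s ^ 2 → ∃ A : MvPolynomial (Fin 2) (𝓞 K),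
        A ≠ 0 ∧ A.totalDegree ≤ 4 * Nat.card α * s ∧
        (∀ a, ∀ k < n, eval (x a) ((mkDerivation (𝓞 K) P)^[k] (rename e A)) = 0) ∧
        l1Norm A ≤ C ^ n * n ^ n := by
  obtain ⟨C, hC1, hC⟩ := exists_ne_zero_forall_eval_iterate_mkDerivation_rename_eq_zero P x e
  refine ⟨C, hC1, fun s n hs hn => ?_⟩
  have hα : 0 < Nat.card α := Nat.card_pos
  -- The box has twice as many monomials as there are equations, of degree of order `√n`.
  let box : Finset (Fin 2 →₀ ℕ) := Finset.univ.finsupp fun _ => Finset.range (2 * Nat.card α * s)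
  have hbox : box.card = 2 * (Nat.card α * n) := by
    rw [Finset.card_finsupp]
    simp only [Finset.card_range, Finset.prod_const, Finset.card_univ, Fintype.card_fin, hn]
    ring
  have hboxdeg : ∀ μ ∈ box, μ.degree ≤ 4 * Nat.card α * s := fun μ hμ => by
    have hlt (i : Fin 2) : μ i < 2 * Nat.card α * s :=
      Finset.mem_range.1 ((Finset.mem_finsupp_iff.1 hμ).2 i (Finset.mem_univ i))
    rw [Finsupp.degree_eq_sum, Fin.sum_univ_two]
    linarith [hlt 0, hlt 1]
  have hdeg : 4 * Nat.card α * s ≤ 2 * n := by rw [hn]; nlinarith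
  obtain ⟨A, hA0, hAbox, hA⟩ := hC n box (by rw [hn]; positivity) hbox
    fun μ hμ => (hboxdeg μ hμ).trans hdeg
  exact ⟨A, hA0, Finset.sup_le fun μ hμ => hboxdeg μ (hAbox hμ), hA⟩

variable [Algebra K ℂ]

lemma exists_norm_aeval_le_l1Norm_mul_pow {κ : Type*} [Finite κ] {g : κ → ℂ → ℂ} {ρ : ℕ}
    (hg : ∀ j, HasFiniteTypeGrowth (g j) ρ) (c : ℕ) :
    ∃ C : ℝ, 0 ≤ C ∧ ∀ (A : MvPolynomial κ (𝓞 K)) (N : ℕ) (z : ℂ), A.totalDegree ^ 2 ≤ c * N →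
      1 ≤ ‖z‖ → ‖z‖ ^ (2 * ρ) = N → ‖aeval g A z‖ ≤ l1Norm A * C ^ N := by
  have := Fintype.ofFinite κ
  choose C hC hgC using hg
  have hC0 : 0 ≤ ∑ j, C j := Finset.sum_nonneg fun j _ => hC j
  refine ⟨Real.exp ((∑ j, C j) * (2 * c)), by positivity, fun A N z hA hz hzN => ?_⟩
  have hzρ : 1 ≤ ‖z‖ ^ ρ := one_le_pow₀ hz
  have hgz (j : κ) : ‖g j z‖ ≤ Real.exp ((∑ j, C j) * (1 + ‖z‖ ^ ρ)) := (hgC j z).trans <| by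
    gcongr
    exact Finset.single_le_sum (fun j _ => hC j) (Finset.mem_univ j)
  have hdeg : A.totalDegree ≤ c * ‖z‖ ^ ρ := by
    refine (sq_le_sq₀ (by positivity) (by positivity)).1 ?_
    calc (A.totalDegree : ℝ) ^ 2 ≤ c * ‖z‖ ^ (2 * ρ) := by rw [hzN]; exact_mod_cast hA
      _ ≤ c ^ 2 * ‖z‖ ^ (2 * ρ) := by
        gcongr
        exact_mod_cast Nat.le_self_pow two_ne_zero c
      _ = (c * ‖z‖ ^ ρ) ^ 2 := by ring
  calc ‖aeval g A z‖
      ≤ l1Norm A * Real.exp ((∑ j, C j) * (1 + ‖z‖ ^ ρ)) ^ A.totalDegree :=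
        (congrArg norm (aeval_pi_apply g A z)).trans_le <|
          norm_eval₂_le norm_algebraMap_le_norm (Real.one_le_exp (by positivity)) hgz le_rfl
    _ = l1Norm A * Real.exp ((∑ j, C j) * (A.totalDegree * (1 + ‖z‖ ^ ρ))) := by
        rw [← Real.exp_nat_mul]
        ring_nf
    _ ≤ l1Norm A * Real.exp ((∑ j, C j) * (c * ‖z‖ ^ ρ * (‖z‖ ^ ρ + ‖z‖ ^ ρ))) := by
        gcongr
        exact l1Norm_nonneg A
    _ = l1Norm A * Real.exp ((∑ j, C j) * (2 * c)) ^ N := by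
        rw [← Real.exp_nat_mul, ← hzN]
        ring_nf

-- The upper bound and the `h - 1` factors of the lower bound contribute `N ^ (2 * h * N)`, so the
-- exponent `(2 * h + 1) * N` leaves a factor `N ^ N` to spare.
lemma le_mul_pow_of_upper_bound_of_lower_bound {N h : ℕ} (hN : 0 < N) (hh : 0 < h)
    {γ C D : ℝ} (hC : 0 ≤ C) (hD : 0 ≤ D)
    (hupper : γ * (N : ℝ) ^ ((2 * h + 1) * N) ≤ C ^ N * N ^ (2 * N))
    (hlower : 1 ≤ γ * (D ^ N * N ^ (2 * N)) ^ (h - 1)) : (N : ℝ) ≤ C * D ^ (h - 1) := by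
  obtain ⟨h, rfl⟩ : ∃ h', h = h' + 1 := ⟨h - 1, by omega⟩
  rw [Nat.add_sub_cancel] at *
  have hcancel : (N : ℝ) ^ N * (N : ℝ) ^ (2 * (h + 1) * N) ≤
      (C * D ^ h) ^ N * (N : ℝ) ^ (2 * (h + 1) * N) :=
    calc (N : ℝ) ^ N * (N : ℝ) ^ (2 * (h + 1) * N)
        = 1 * (N : ℝ) ^ ((2 * (h + 1) + 1) * N) := by ring
      _ ≤ γ * (D ^ N * N ^ (2 * N)) ^ h * (N : ℝ) ^ ((2 * (h + 1) + 1) * N) := by gcongr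
      _ = γ * (N : ℝ) ^ ((2 * (h + 1) + 1) * N) * (D ^ N * N ^ (2 * N)) ^ h := by ring
      _ ≤ C ^ N * N ^ (2 * N) * (D ^ N * N ^ (2 * N)) ^ h := by gcongr
      _ = (C * D ^ h) ^ N * (N : ℝ) ^ (2 * (h + 1) * N) := by ring
  exact le_of_pow_le_pow_left₀ hN.ne' (by positivity)
    (le_of_mul_le_mul_right hcancel (by positivity))

variable {ι : Type*} {f : ι → ℂ → ℂ} {P : ι → MvPolynomial ι (𝓞 K)} {W : Finset ℂ}

lemma exists_one_le_norm_iteratedDeriv_mul_pow [Finite ι]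
    (hf : ∀ i z, HasDerivAt (f i) (aeval f (P i) z) z)
    (hW : ∀ w ∈ W, ∀ i, f i w ∈ Set.range (algebraMap (𝓞 K) ℂ)) :
    ∃ C : ℝ, 0 ≤ C ∧ ∀ (N : ℕ) (Q : MvPolynomial ι (𝓞 K)), 0 < N → Q.totalDegree ≤ 2 * N →
      ∀ w ∈ W, iteratedDeriv N (aeval f Q) w ≠ 0 →
        1 ≤ ‖iteratedDeriv N (aeval f Q) w‖ *
          (C ^ N * N ^ N * l1Norm Q) ^ (Module.finrank ℚ K - 1) := by
  choose x hx using fun w : W => hW w w.2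
  obtain ⟨C, hC1, hC⟩ := exists_norm_eval_iterate_mkDerivation_le P x
  refine ⟨C, by linarith, fun N Q hN hQ w hw hne => ?_⟩
  have hval : iteratedDeriv N (aeval f Q) w =
      algebraMap (𝓞 K) ℂ (eval (x ⟨w, hw⟩) ((mkDerivation (𝓞 K) P)^[N] Q)) :=
    iteratedDeriv_aeval_eq_algebraMap hf (fun i => (hx ⟨w, hw⟩ i).symm) Q N
  rw [hval] at hne ⊢
  have hne0 := ne_zero_of_map hne
  refine (one_le_norm_mul_norm_pow hne0).trans ?_
  gcongr
  exact hC _ Q N N hQ le_rfl hN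

lemma exists_norm_iteratedDeriv_mul_pow_le
    (hf : ∀ i z, HasDerivAt (f i) (aeval f (P i) z) z) {κ : Type*} [Finite κ] {e : κ → ι} {ρ q : ℕ}
    (hρ : 0 < ρ) (hgrowth : ∀ j, HasFiniteTypeGrowth (f (e j)) ρ) (hWq : 2 * ρ * q ≤ W.card)
    (c : ℕ) {C₁ : ℝ} (hC₁ : 0 ≤ C₁) :
    ∃ C : ℝ, 0 ≤ C ∧ ∀ᶠ N : ℕ in Filter.atTop, ∀ A : MvPolynomial κ (𝓞 K),
      A.totalDegree ^ 2 ≤ c * N → l1Norm A ≤ C₁ ^ N * N ^ N →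
      (∀ w ∈ W, ∀ k < N, iteratedDeriv k (aeval f (rename e A)) w = 0) →
      ∀ w ∈ W, ‖iteratedDeriv N (aeval f (rename e A)) w‖ * (N : ℝ) ^ (q * N) ≤
        C ^ N * N ^ (2 * N) := by
  obtain ⟨C, hC, hFC⟩ := exists_norm_aeval_le_l1Norm_mul_pow (K := K) hgrowth c
  obtain ⟨T₀, hT₀, hWT₀⟩ := W.finite_toSet.isBounded.exists_pos_norm_le
  obtain ⟨T, hT1, hWT⟩ : ∃ T : ℝ, 1 ≤ T ∧ ∀ w ∈ W, ‖w‖ ≤ T :=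
    ⟨T₀ + 1, by linarith, fun w hw => (hWT₀ w hw).trans (by linarith)⟩
  refine ⟨((2 * T + 1) * 2) ^ W.card * (C₁ * C), by positivity, ?_⟩
  filter_upwards [tendsto_natCast_atTop_atTop.eventually_ge_atTop ((2 * T) ^ (2 * ρ))]
    with N hN A hdeg hA hvan w hw
  obtain ⟨R, hR0, hRN⟩ : ∃ R : ℝ, 0 ≤ R ∧ R ^ (2 * ρ) = N :=
    ⟨(N : ℝ) ^ ((2 * ρ : ℕ) : ℝ)⁻¹, by positivity,
      Real.rpow_inv_natCast_pow N.cast_nonneg (by positivity)⟩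
  have hTR : 2 * T ≤ R := le_of_pow_le_pow_left₀ (by positivity) hR0 (hN.trans_eq hRN.symm)
  refine norm_iteratedDeriv_mul_pow_le (differentiable_aeval hf _) hvan hT1 hWT hTR hRN hWq
    (by positivity) (fun z hz => ?_) hw
  rw [aeval_rename]
  calc ‖aeval (f ∘ e) A z‖ ≤ l1Norm A * C ^ N := hFC A N z hdeg (by linarith) (by rw [hz, hRN])
    _ ≤ C₁ ^ N * N ^ N * C ^ N := by gcongr
    _ = (C₁ * C) ^ N * N ^ N := by ring

lemma eventually_iteratedDeriv_eq_zero_of_forall_lt [Finite ι]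
    (hf : ∀ i z, HasDerivAt (f i) (aeval f (P i) z) z) {κ : Type*} [Finite κ] {e : κ → ι} {ρ : ℕ}
    (hρ : 0 < ρ) (hgrowth : ∀ j, HasFiniteTypeGrowth (f (e j)) ρ)
    (hW : ∀ w ∈ W, ∀ i, f i w ∈ Set.range (algebraMap (𝓞 K) ℂ))
    (hcard : 2 * ρ * (2 * Module.finrank ℚ K + 1) ≤ W.card) (c : ℕ) {C₁ : ℝ} (hC₁ : 0 ≤ C₁) :
    ∀ᶠ N : ℕ in Filter.atTop, ∀ A : MvPolynomial κ (𝓞 K),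
      A.totalDegree ^ 2 ≤ c * N → l1Norm A ≤ C₁ ^ N * N ^ N →
      (∀ w ∈ W, ∀ k < N, iteratedDeriv k (aeval f (rename e A)) w = 0) →
      ∀ w ∈ W, iteratedDeriv N (aeval f (rename e A)) w = 0 := by
  obtain ⟨C₂, hC₂, hupper⟩ := exists_norm_iteratedDeriv_mul_pow_le hf hρ hgrowth hcard c hC₁
  obtain ⟨C, hC, hlower⟩ := exists_one_le_norm_iteratedDeriv_mul_pow hf hW
  filter_upwards [hupper, Filter.eventually_gt_atTop 0, Filter.eventually_ge_atTop c,
    tendsto_natCast_atTop_atTop.eventually_gt_atTop (C₂ * (C * C₁) ^ (Module.finrank ℚ K - 1))]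
    with N hupper hN hcN hBN A hdeg hA hvan w hw
  by_contra hne
  have hdegN : (rename e A).totalDegree ≤ 2 * N := by
    have := totalDegree_rename_le e A
    nlinarith
  refine hBN.not_ge <| le_mul_pow_of_upper_bound_of_lower_bound hN Module.finrank_pos hC₂
    (by positivity) (hupper A hdeg hA hvan w hw)
    ((hlower N _ hN hdegN w hw hne).trans ?_)
  have hnonneg := l1Norm_nonneg (rename e A)
  gcongr ?_ * ?_ ^ _
  calc C ^ N * N ^ N * l1Norm (rename e A) ≤ C ^ N * N ^ N * (C₁ ^ N * N ^ N) := by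
        gcongr
        exact (l1Norm_rename_le e A).trans hA
    _ = (C * C₁) ^ N * N ^ (2 * N) := by ring

theorem card_lt_of_forall_mem_range_algebraMap [Finite ι]
    (hf : ∀ i z, HasDerivAt (f i) (aeval f (P i) z) z) {e : Fin 2 → ι} {ρ : ℕ}
    (hρ : 0 < ρ) (hgrowth : ∀ j, HasFiniteTypeGrowth (f (e j)) ρ)
    (hind : AlgebraicIndependent (𝓞 K) fun j => f (e j))
    (hW : ∀ w ∈ W, ∀ i, f i w ∈ Set.range (algebraMap (𝓞 K) ℂ)) :
    W.card < 2 * ρ * (2 * Module.finrank ℚ K + 1) := by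
  by_contra! hcard
  obtain ⟨w₀, hw₀⟩ : W.Nonempty := Finset.card_pos.1 (hcard.trans_lt' (by positivity))
  have : Nonempty W := ⟨w₀, hw₀⟩
  choose x hx using fun w : W => hW w w.2
  obtain ⟨C, hC1, hC⟩ := exists_auxiliary_polynomial P x e
  obtain ⟨s, hs, hs0⟩ := ((Filter.eventually_forall_ge_atTop.2 <|
    eventually_iteratedDeriv_eq_zero_of_forall_lt (e := e) hf hρ hgrowth hW hcard
      (8 * Nat.card W) (zero_le_one.trans hC1)).and (Filter.eventually_gt_atTop 0)).exists
  obtain ⟨n, hn⟩ : ∃ n, n = 2 * Nat.card W * s ^ 2 := ⟨_, rfl⟩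
  obtain ⟨A, hA0, hdeg, hAvan, hA⟩ := hC s n hs0 hn
  have hmem : 0 < Nat.card W := Nat.card_pos
  have hsn : s ≤ n := by rw [hn]; nlinarith
  have hvan : ∀ N ≥ n, ∀ w ∈ W, ∀ k < N, iteratedDeriv k (aeval f (rename e A)) w = 0 := by
    refine fun N hN => Nat.le_induction (fun w hw k hk => ?_) (fun N hN ih w hw k hk => ?_) N hN
    · refine (iteratedDeriv_aeval_eq_algebraMap hf (fun i => (hx ⟨w, hw⟩ i).symm) _ k).trans ?_
      rw [hAvan ⟨w, hw⟩ k hk, map_zero]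
    · have hAN : l1Norm A ≤ C ^ N * N ^ N := hA.trans <| by
        gcongr ?_ * ?_
        · exact pow_le_pow_right₀ hC1 hN
        · exact_mod_cast (Nat.pow_le_pow_left hN n).trans
            (Nat.pow_le_pow_right (by omega) hN)
      have hdegN : A.totalDegree ^ 2 ≤ 8 * Nat.card W * N := by
        calc A.totalDegree ^ 2 ≤ (4 * Nat.card W * s) ^ 2 := by gcongr
          _ = 8 * Nat.card W * n := by rw [hn]; ring
          _ ≤ 8 * Nat.card W * N := by gcongr
      rcases Nat.lt_succ_iff_lt_or_eq.1 hk with hlt | rfl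
      · exact ih w hw k hlt
      · exact hs _ (hsn.trans hN) A hdegN hAN ih w hw
  have hF : aeval f (rename e A) = 0 :=
    eq_zero_of_forall_iteratedDeriv_eq_zero (differentiable_aeval hf _) fun k =>
      hvan (n + k + 1) (by omega) w₀ hw₀ k (by omega)
  refine hA0 (hind.eq_zero_of_aeval_eq_zero A ?_)
  rwa [aeval_rename] at hF

end RingOfIntegers

section Integrality

variable {ι κ R K A : Type*}

lemma exists_forall_isInteger_smul [CommRing R] [IsDomain R] [Field K] [Algebra R K]
    [IsFractionRing R K] {α : Type*} [Finite ι] [Finite α] (P : ι → MvPolynomial κ K)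
    (x : α → K) : ∃ a : R, a ≠ 0 ∧ (∀ i μ, IsLocalization.IsInteger R (a • (P i).coeff μ)) ∧
      ∀ j, IsLocalization.IsInteger R (a • x j) := by
  obtain ⟨a, ha⟩ := IsLocalization.exist_integer_multiples_of_finite (nonZeroDivisors R) <|
    Sum.elim (fun q : Σ i, (P i).support => (P q.1).coeff q.2) x
  refine ⟨a, nonZeroDivisors.ne_zero a.2, fun i μ => ?_, fun j => ha (.inr j)⟩
  by_cases hμ : μ ∈ (P i).support
  · exact ha (.inl ⟨i, μ, hμ⟩)
  · rw [notMem_support_iff.1 hμ, smul_zero]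
    exact IsLocalization.isInteger_zero

-- The powers of `a` homogenize `P`; the extra factor clears the denominators of its coefficients.
lemma exists_forall_aeval_mul_eq [CommRing R] [CommRing K] [Algebra R K] [CommRing A]
    [Algebra R A] [Algebra K A] [IsScalarTower R K A] {P : MvPolynomial ι K} {t : ℕ}
    (hP : P.totalDegree ≤ t) {a : R} (ha : ∀ μ, IsLocalization.IsInteger R (a • P.coeff μ)) :
    ∃ Q : MvPolynomial ι R, ∀ y : ι → A,
      aeval (fun i => algebraMap R A a * y i) Q = algebraMap R A a ^ (t + 1) * aeval y P := by
  choose b hb using ha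
  refine ⟨∑ μ ∈ P.support, monomial μ (b μ * a ^ (t - μ.degree)), fun y => ?_⟩
  rw [map_sum, aeval_def y, eval₂_eq, Finset.mul_sum]
  refine Finset.sum_congr rfl fun μ hμ => ?_
  have hbA : algebraMap R A (b μ) = algebraMap R A a * algebraMap K A (P.coeff μ) := by
    rw [IsScalarTower.algebraMap_apply R K A, hb, Algebra.smul_def, map_mul,
      ← IsScalarTower.algebraMap_apply R K A]
  have hdeg : t - μ.degree + μ.degree = t := Nat.sub_add_cancel ((le_totalDegree hμ).trans hP)
  calc aeval (fun i => algebraMap R A a * y i) (monomial μ (b μ * a ^ (t - μ.degree)))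
      = algebraMap R A (b μ) * algebraMap R A a ^ (t - μ.degree + μ.degree) *
          ∏ i ∈ μ.support, y i ^ μ i := by
        simp only [aeval_monomial, map_mul, map_pow, Finsupp.prod, mul_pow,
          Finset.prod_mul_distrib, Finset.prod_pow_eq_pow_sum, ← Finsupp.degree_apply]
        ring
    _ = _ := by
        rw [hdeg, hbA]
        ring

lemma algebraicIndependent_mul_comp [CommRing R] [IsDomain R] [CommRing A] [Algebra R A]
    {X Y : Type*} {g : κ → X → A} (hg : AlgebraicIndependent R g) {φ : Y → X}
    (hφ : Function.Surjective φ) {a : R} (ha : a ≠ 0) :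
    AlgebraicIndependent R fun j y => algebraMap R A a * g j (φ y) := by
  let precomp : (X → A) →ₐ[R] (Y → A) := AlgHom.pi fun y => Pi.evalAlgHom R _ (φ y)
  have hprecomp : Function.Injective precomp := fun u v huv => hφ.injective_comp_right huv
  have htrans : Transcendental R (Polynomial.C a * Polynomial.X) :=
    Polynomial.transcendental _ (by rw [Polynomial.natDegree_C_mul_X a ha]; exact one_ne_zero)
      (by rw [Polynomial.leadingCoeff_C_mul_X]; exact mem_nonZeroDivisors_of_ne_zero ha)
  convert (hg.map' hprecomp).polynomial_aeval_of_transcendental fun _ : κ => htrans using 2 with j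
  ext y
  simp [precomp]

end Integrality

section Criterion

variable {ι K : Type*} [Field K] [Algebra K ℂ] {f : ι → ℂ → ℂ} {P : ι → MvPolynomial ι K}

lemma hasDerivAt_mul_comp_pow_mul {R : Type*} [CommRing R] [Algebra R ℂ]
    (hf : ∀ i z, HasDerivAt (f i) (aeval f (P i) z) z) {a : R} {t : ℕ}
    {Q : ι → MvPolynomial ι R}
    (hQ : ∀ i (y : ι → ℂ), aeval (fun i => algebraMap R ℂ a * y i) (Q i) =
      algebraMap R ℂ a ^ (t + 1) * aeval y (P i)) (i : ι) (z : ℂ) :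
    HasDerivAt (fun z => algebraMap R ℂ a * f i (algebraMap R ℂ a ^ t * z))
      (aeval (fun i z => algebraMap R ℂ a * f i (algebraMap R ℂ a ^ t * z)) (Q i) z) z := by
  have hinner : HasDerivAt (fun z => algebraMap R ℂ a ^ t * z) (algebraMap R ℂ a ^ t) z := by
    simpa only [mul_one] using (hasDerivAt_id' z).const_mul (algebraMap R ℂ a ^ t)
  refine (((hf i _).comp z hinner).const_mul (algebraMap R ℂ a)).congr_deriv ?_
  refine Eq.symm ((aeval_pi_apply _ _ _).trans ((hQ i _).trans ?_))
  rw [aeval_pi_apply]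
  ring

variable [NumberField K] [Finite ι] {e : Fin 2 → ι} {ρ : ℕ}

theorem card_lt_of_forall_mem_range (hf : ∀ i z, HasDerivAt (f i) (aeval f (P i) z) z)
    (hρ : 0 < ρ) (hgrowth : ∀ j, HasFiniteTypeGrowth (f (e j)) ρ)
    (hind : AlgebraicIndependent K fun j => f (e j)) {W : Finset ℂ}
    (hW : ∀ w ∈ W, ∀ i, f i w ∈ Set.range (algebraMap K ℂ)) :
    W.card < 2 * ρ * (2 * Module.finrank ℚ K + 1) := by
  choose x hx using fun w : W => hW w w.2
  obtain ⟨t, ht⟩ := Finite.exists_le fun i => (P i).totalDegree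
  obtain ⟨a, ha, haP, hax⟩ := exists_forall_isInteger_smul (R := 𝓞 K) P fun q : W × ι => x q.1 q.2
  choose Q hQ using fun i => exists_forall_aeval_mul_eq (A := ℂ) (ht i) (haP i)
  let b : ℂ := algebraMap (𝓞 K) ℂ a
  have hb : b ^ t ≠ 0 := pow_ne_zero t <| by
    rwa [map_ne_zero_iff _ (FaithfulSMul.algebraMap_injective (𝓞 K) ℂ)]
  have hgind : AlgebraicIndependent (𝓞 K) fun j z => b * f (e j) (b ^ t * z) :=
    algebraicIndependent_mul_comp (hind.restrictScalars RingOfIntegers.coe_injective)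
      (mul_left_surjective₀ hb) ha
  have hinj : Function.Injective fun w : ℂ => w / b ^ t := fun u v h => (div_left_inj' hb).1 h
  rw [← W.card_image_of_injective hinj]
  refine card_lt_of_forall_mem_range_algebraMap (f := fun i z => b * f i (b ^ t * z)) (P := Q)
    (hasDerivAt_mul_comp_pow_mul hf hQ) hρ
    (fun j => (hgrowth j).const_mul_comp_const_mul b (b ^ t)) hgind ?_
  rw [Finset.forall_mem_image]
  intro w hw i
  obtain ⟨y, hy⟩ := hax (⟨w, hw⟩, i)
  refine ⟨y, ?_⟩
  rw [mul_div_cancel₀ _ hb, ← hx ⟨w, hw⟩, IsScalarTower.algebraMap_apply (𝓞 K) K ℂ, hy,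
    Algebra.smul_def, map_mul, ← IsScalarTower.algebraMap_apply (𝓞 K) K ℂ]

theorem encard_setOf_forall_mem_range_lt (hf : ∀ i z, HasDerivAt (f i) (aeval f (P i) z) z)
    (hρ : 0 < ρ) (hgrowth : ∀ j, HasFiniteTypeGrowth (f (e j)) ρ)
    (hind : AlgebraicIndependent K fun j => f (e j)) :
    {w | ∀ i, f i w ∈ Set.range (algebraMap K ℂ)}.encard <
      (2 * ρ * (2 * Module.finrank ℚ K + 1) : ℕ) := by
  by_contra! hcard
  obtain ⟨S, hS, hScard⟩ := Set.exists_subset_encard_eq hcard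
  have hSfin : S.Finite := Set.finite_of_encard_eq_coe hScard
  refine (card_lt_of_forall_mem_range (W := hSfin.toFinset) hf hρ hgrowth hind fun w hw =>
    hS (hSfin.mem_toFinset.1 hw)).ne ?_
  rwa [hSfin.encard_eq_coe_toFinset_card, Nat.cast_inj] at hScard

end Criterion

section Subfield

variable {L σ X : Type*} [Field L] {K : Subfield L}

lemma exists_map_subtype_eq {P : MvPolynomial σ L} (hP : ∀ m, P.coeff m ∈ K) :
    ∃ Q : MvPolynomial σ K, map K.subtype Q = P := by
  refine mem_range_map_iff_coeffs_subset.2 fun c hc => ?_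
  obtain ⟨m, -, rfl⟩ := mem_coeffs_iff.1 hc
  exact ⟨⟨_, hP m⟩, rfl⟩

lemma algebraicIndependent_of_forall_eval_eq_zero {g : σ → X → L}
    (hg : ∀ P : MvPolynomial σ L, (∀ m, P.coeff m ∈ K) →
      (∀ z, eval (fun i => g i z) P = 0) → P = 0) :
    AlgebraicIndependent K g := by
  refine algebraicIndependent_iff.2 fun Q hQ => ?_
  refine map_injective K.subtype K.subtype_injective ?_
  rw [map_zero]
  refine hg _ (fun m => ?_) fun z => ?_
  · rw [coeff_map]
    exact (Q.coeff m).2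
  · have hz := congrFun hQ z
    rw [aeval_pi_apply, aeval_def] at hz
    rw [eval_map]
    exact hz

end Subfield

/-- **Schneider–Lang Criterion.** Let `K ⊆ ℂ` be a number field and
`f₁, …, f_d` entire functions, with `f₁, f₂` algebraically independent over `K`
and of finite order of growth, each `f_i'` a polynomial with coefficients in `K`
in `f₁, …, f_d`. Then the set of `w ∈ ℂ` with `f_i(w) ∈ K` for all `i` is finite. -/
theorem schneider_lang_criterion
    (K : Subfield ℂ) (hK : FiniteDimensional ℚ K)
    (d : ℕ) (hd : 2 ≤ d)
    (f : Fin d → ℂ → ℂ)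
    (hent : ∀ i, Differentiable ℂ (f i))
    (horder1 : HasFiniteOrderGrowth (f (Fin.castLE hd 0)))
    (horder2 : HasFiniteOrderGrowth (f (Fin.castLE hd 1)))
    (halgind : ∀ P : MvPolynomial (Fin 2) ℂ, (∀ m, MvPolynomial.coeff m P ∈ K) →
      (∀ z : ℂ, MvPolynomial.eval (fun i : Fin 2 => f (Fin.castLE hd i) z) P = 0) →
      P = 0)
    (hdiff : ∀ i, ∃ P : MvPolynomial (Fin d) ℂ, (∀ m, MvPolynomial.coeff m P ∈ K) ∧
      ∀ z : ℂ, deriv (f i) z = MvPolynomial.eval (fun j => f j z) P) :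
    {w : ℂ | ∀ i, f i w ∈ K}.Finite := by
  have : NumberField K := { to_finiteDimensional := hK }
  choose P hPK hP using hdiff
  choose Q hQ using fun i => exists_map_subtype_eq (hPK i)
  have hderiv (i : Fin d) (z : ℂ) : HasDerivAt (f i) (aeval f (Q i) z) z := by
    have hval : aeval f (Q i) z = deriv (f i) z := by
      rw [hP, ← hQ, eval_map]
      exact aeval_pi_apply _ _ _
    exact hval ▸ (hent i z).hasDerivAt
  obtain ⟨ρ, ⟨hρ1, hρ2⟩, hρ⟩ :=
    (((horder1.eventually_hasFiniteTypeGrowth (hent _).continuous).and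
      (horder2.eventually_hasFiniteTypeGrowth (hent _).continuous)).and
        (Filter.eventually_gt_atTop 0)).exists
  have hcard := encard_setOf_forall_mem_range_lt hderiv hρ (Fin.forall_fin_two.2 ⟨hρ1, hρ2⟩)
    (algebraicIndependent_of_forall_eval_eq_zero halgind)
  refine (Set.encard_lt_top_iff.1 (hcard.trans (ENat.natCast_lt_top _))).subset fun w hw i => ?_
  exact ⟨⟨f i w, hw i⟩, rfl⟩
end

section
/- Let d and n be integers with d > n ≥ 1, let K ⊆ ℂ be a number field, and let f_1, …, f_d be entire functions on ℂ^n which are algebraically independent over K and have finite order of growth. Assume that for each 1 ≤ ν ≤ n and 1 ≤ i ≤ d there is a polynomial P_{ν,i} ∈ K[X_1, …, X_d] such that (∂/∂z_ν) f_i = P_{ν,i}(f_1, …, f_d) identically on ℂ^n. Let (y_1, …, y_n) be a basis of ℂ^n over ℂ. Then the numbers f_i(s_1 y_1 + ⋯ + s_n y_n), for 1 ≤ i ≤ d and (s_1, …, s_n) ∈ ℤ^n, do not all belong to K. -/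
/-- `|f|_R`: supremum of `|f z|` over the polydisc `max_i |z_i| ≤ R`. -/
noncomputable def PolydiscSup (n : ℕ) (f : (Fin n → ℂ) → ℂ) (R : ℝ) : ℝ :=
  sSup ((fun z => ‖f z‖) '' {z : Fin n → ℂ | ∀ i, ‖z i‖ ≤ R})

/-- `f : ℂ^n → ℂ` has finite order of growth. -/
def HasFiniteOrderGrowthN (n : ℕ) (f : (Fin n → ℂ) → ℂ) : Prop :=
  ∃ ρ : ℝ, 0 ≤ ρ ∧ ∀ ε > (0 : ℝ), ∃ R₀ : ℝ, ∀ R ≥ R₀,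
    PolydiscSup n f R ≤ Real.exp (R ^ (ρ + ε))

/-!
Write `Y t = ∑ ν, t ν • y ν` and suppose that every `g j = f j ∘ Y` takes values in `K` on the
grid `Z ^ n`. Siegel's lemma produces a nonzero polynomial `G` with coefficients in `𝓞 K`, of
controlled degree and height, such that `F = G(g)` vanishes to high order at all points of the
grid. Let `X` be the largest order to which `F` vanishes at every grid point: it is finite, since
`F ≠ 0` by algebraic independence, and some derivative of order `X` is nonzero at a grid point.
By the differential equations that derivative is a nonzero element of `K` with controlled
denominator and conjugates, hence is not too small. By iterated Hermite interpolation, one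
coordinate at a time, it is at most about `X ^ (-c * X)` with `c` growing with the size of `Z`.
For a large grid this bounds `X`, while the construction lets `X` be arbitrarily large.
-/

section IteratedDerivations

variable {ι κ R A : Type*} [CommSemiring R] [CommSemiring A] [Algebra R A]

/-- The composite `D i₁ ∘ ⋯ ∘ D iₖ` of derivations along a word `i₁ ⋯ iₖ`. -/
def iterDerivation (D : ι → Derivation R A A) (w : List ι) : Module.End R A :=
  (w.map fun i => (D i : A →ₗ[R] A)).prod

@[simp] theorem iterDerivation_nil (D : ι → Derivation R A A) : iterDerivation D [] = 1 := rfl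

@[simp] theorem iterDerivation_cons (D : ι → Derivation R A A) (i : ι) (w : List ι) (a : A) :
    iterDerivation D (i :: w) a = D i (iterDerivation D w a) := by
  simp [iterDerivation]

theorem iterDerivation_append (D : ι → Derivation R A A) (w w' : List ι) (a : A) :
    iterDerivation D (w ++ w') a = iterDerivation D w (iterDerivation D w' a) := by
  simp [iterDerivation]

theorem iterDerivation_map (D : ι → Derivation R A A) (u : κ → ι) (w : List κ) :
    iterDerivation D (w.map u) = iterDerivation (fun k => D (u k)) w := by
  simp [iterDerivation, Function.comp_def]

theorem iterDerivation_perm {D : ι → Derivation R A A}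
    (hD : ∀ i j a, D i (D j a) = D j (D i a)) {w w' : List ι} (h : w.Perm w') :
    iterDerivation D w = iterDerivation D w' := by
  refine (h.map _).prod_eq' (List.pairwise_map.2 (List.pairwise_of_forall fun i j => ?_))
  exact LinearMap.ext fun a => hD i j a

theorem map_iterDerivation {S B : Type*} [CommSemiring S] [CommSemiring B] [Algebra S B]
    {D : ι → Derivation R A A} {D' : ι → Derivation S B B} {φ : A → B}
    (h : ∀ i a, φ (D i a) = D' i (φ a)) (w : List ι) (a : A) :
    φ (iterDerivation D w a) = iterDerivation D' w (φ a) := by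
  induction w with
  | nil => rfl
  | cons i w ih => simp [h, ih]

end IteratedDerivations

section EntireFunctions

open scoped ContDiff

variable {E E' : Type*} [NormedAddCommGroup E] [NormedSpace ℂ E]
  [NormedAddCommGroup E'] [NormedSpace ℂ E']

/-- The algebra of entire functions on a complex normed space. Holomorphy is encoded as
smoothness over `ℂ`, which makes stability under derivatives immediate. -/
def entireFunctions (E : Type*) [NormedAddCommGroup E] [NormedSpace ℂ E] :
    Subalgebra ℂ (E → ℂ) where
  carrier := {F | ContDiff ℂ ∞ F}
  mul_mem' {F G} (hF : ContDiff ℂ ∞ F) (hG : ContDiff ℂ ∞ G) := hF.mul hG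
  add_mem' {F G} (hF : ContDiff ℂ ∞ F) (hG : ContDiff ℂ ∞ G) := hF.add hG
  algebraMap_mem' c := (contDiff_const : ContDiff ℂ ∞ fun _ : E => c)

instance : CoeFun (entireFunctions E) fun _ => E → ℂ := ⟨Subtype.val⟩

namespace entireFunctions

theorem mem_iff {F : E → ℂ} : F ∈ entireFunctions E ↔ ContDiff ℂ ∞ F := Iff.rfl

theorem contDiff (F : entireFunctions E) : ContDiff ℂ ∞ F := F.2

theorem differentiable (F : entireFunctions E) : Differentiable ℂ F :=
  (contDiff F).differentiable (by simp)

/-- Evaluation at a point, as a homomorphism of algebras. -/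
def evalAt (p : E) : entireFunctions E →ₐ[ℂ] ℂ :=
  (Pi.evalAlgHom ℂ (fun _ => ℂ) p).comp (entireFunctions E).val

@[simp] theorem evalAt_apply (p : E) (F : entireFunctions E) : evalAt p F = F p := rfl

/-- Substitution of the affine map `t ↦ b + A t`. -/
def compAffine (b : E) (A : E' →L[ℂ] E) : entireFunctions E →ₐ[ℂ] entireFunctions E' where
  toFun F := ⟨fun t => F (b + A t), (contDiff F).comp (contDiff_const.add A.contDiff)⟩
  map_one' := rfl
  map_mul' _ _ := rfl
  map_zero' := rfl
  map_add' _ _ := rfl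
  commutes' _ := rfl

@[simp] theorem compAffine_apply (b : E) (A : E' →L[ℂ] E) (F : entireFunctions E) (t : E') :
    compAffine b A F t = F (b + A t) := rfl

/-- Restriction to the line `x ↦ b + x • v`. -/
noncomputable def restrictLine (b v : E) : entireFunctions E →ₐ[ℂ] entireFunctions ℂ :=
  compAffine b (ContinuousLinearMap.toSpanSingleton ℂ v)

@[simp] theorem restrictLine_apply (b v : E) (F : entireFunctions E) (x : ℂ) :
    restrictLine b v F x = F (b + x • v) := rfl

/-- The derivation `F ↦ ∂_v F` in a direction `v`, which depends linearly on `v`. -/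
noncomputable def dirDeriv :
    E →ₗ[ℂ] Derivation ℂ (entireFunctions E) (entireFunctions E) where
  toFun v := Derivation.mk'
    { toFun := fun F => ⟨fun z => fderiv ℂ F z v,
        ((contDiff F).fderiv_right (m := ∞) le_rfl).clm_apply contDiff_const⟩
      map_add' := fun F G => Subtype.ext <| funext fun z => by
        simp [fderiv_add (differentiable F z) (differentiable G z)]
      map_smul' := fun c F => Subtype.ext <| funext fun z => by
        simp [fderiv_const_smul (differentiable F z)] }
    fun F G => Subtype.ext <| funext fun z => by
      simp [fderiv_mul (differentiable F z) (differentiable G z)]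
  map_add' v w := Derivation.ext fun F => Subtype.ext <| funext fun z => by simp
  map_smul' c v := Derivation.ext fun F => Subtype.ext <| funext fun z => by simp

theorem dirDeriv_comm (v w : E) (F : entireFunctions E) :
    dirDeriv v (dirDeriv w F) = dirDeriv w (dirDeriv v F) := by
  refine Subtype.ext (funext fun z => ?_)
  have hd : DifferentiableAt ℂ (fderiv ℂ F) z :=
    ((contDiff F).fderiv_right (m := ∞) le_rfl).differentiable (by simp) z
  have hsecond (u u' : E) : dirDeriv u (dirDeriv u' F) z = fderiv ℂ (fderiv ℂ F) z u u' := by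
    change fderiv ℂ (fun y => fderiv ℂ F y u') z u = _
    simp [fderiv_clm_apply hd (differentiableAt_const _)]
  rw [hsecond, hsecond]
  exact (contDiff F).contDiffAt.isSymmSndFDerivAt (by simpa using ENat.LEInfty.out) v w

theorem dirDeriv_compAffine (b : E) (A : E' →L[ℂ] E) (v : E') (F : entireFunctions E) :
    dirDeriv v (compAffine b A F) = compAffine b A (dirDeriv (A v) F) := by
  refine Subtype.ext (funext fun t => ?_)
  have hA : HasFDerivAt (fun t => b + A t) A t := A.hasFDerivAt.const_add b
  exact congrArg (· v) (((differentiable F (b + A t)).hasFDerivAt.comp t hA).fderiv)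

theorem iterDerivation_dirDeriv_compAffine (b : E) (A : E' →L[ℂ] E) (l : List E')
    (F : entireFunctions E) :
    iterDerivation dirDeriv l (compAffine b A F) =
      compAffine b A (iterDerivation dirDeriv (l.map A) F) := by
  rw [iterDerivation_map]
  exact (map_iterDerivation (fun v G => (dirDeriv_compAffine b A v G).symm) l F).symm

theorem iteratedDeriv_eq_iterDerivation (G : entireFunctions ℂ) (k : ℕ) :
    iteratedDeriv k G = iterDerivation dirDeriv (List.replicate k 1) G := by
  induction k with
  | zero => simp
  | succ k ih =>
    rw [iteratedDeriv_succ, ih, List.replicate_succ, iterDerivation_cons]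
    rfl

theorem iteratedDeriv_restrictLine (b v : E) (F : entireFunctions E) (k : ℕ) (x : ℂ) :
    iteratedDeriv k (restrictLine b v F) x =
      iterDerivation dirDeriv (List.replicate k v) F (b + x • v) := by
  rw [iteratedDeriv_eq_iterDerivation, restrictLine, iterDerivation_dirDeriv_compAffine]
  simp

/-! ### Cauchy's estimate -/

theorem norm_dirDeriv_le {F : entireFunctions E} {p v : E} {C ρ M : ℝ} (hC : 0 < C)
    (hv : ‖v‖ ≤ C) (hρ : 0 < ρ) (hM : ∀ z, ‖z - p‖ ≤ ρ → ‖F z‖ ≤ M) :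
    ‖dirDeriv v F p‖ ≤ C / ρ * M := by
  have hderiv : dirDeriv v F p = deriv (restrictLine p v F) 0 := by
    simpa using (iteratedDeriv_restrictLine p v F 1 0).symm
  have hCauchy := Complex.norm_deriv_le_of_forall_mem_sphere_norm_le (c := 0) (R := ρ / C)
    (C := M) (by positivity) (differentiable (restrictLine p v F)).diffContOnCl fun x hx => by
      refine hM _ ?_
      rw [mem_sphere_zero_iff_norm] at hx
      calc ‖p + x • v - p‖ = ρ / C * ‖v‖ := by rw [add_sub_cancel_left, norm_smul, hx]
        _ ≤ ρ / C * C := by gcongr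
        _ = ρ := by field_simp
  rw [hderiv]
  exact hCauchy.trans_eq (by field_simp)

theorem norm_iterDerivation_dirDeriv_le {F : entireFunctions E} {l : List E} {p : E} {C ρ M : ℝ}
    (hC : 0 < C) (hl : ∀ v ∈ l, ‖v‖ ≤ C) (hρ : 0 < ρ)
    (hM : ∀ z, ‖z - p‖ ≤ l.length * ρ → ‖F z‖ ≤ M) :
    ‖iterDerivation dirDeriv l F p‖ ≤ (C / ρ) ^ l.length * M := by
  induction l generalizing p with
  | nil => simpa using hM p (by simp)
  | cons v l ih =>
    have hball (q : E) (hq : ‖q - p‖ ≤ ρ) :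
        ‖iterDerivation dirDeriv l F q‖ ≤ (C / ρ) ^ l.length * M := by
      refine ih (fun u hu => hl u (List.mem_cons_of_mem _ hu)) fun z hz => hM z ?_
      calc ‖z - p‖ ≤ ‖z - q‖ + ‖q - p‖ := norm_sub_le_norm_sub_add_norm_sub z q p
        _ ≤ (v :: l).length * ρ := by
          push_cast [List.length_cons]
          linarith
    rw [iterDerivation_cons, List.length_cons, pow_succ', mul_assoc]
    exact norm_dirDeriv_le hC (hl v List.mem_cons_self) hρ hball

/-! ### Order of vanishing -/

/-- All iterated directional derivatives of `F` of order less than `M` vanish at `p`. -/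
def VanishesToOrder (F : entireFunctions E) (p : E) (M : ℕ) : Prop :=
  ∀ l : List E, l.length < M → iterDerivation dirDeriv l F p = 0

theorem VanishesToOrder.apply_eq_zero {F : entireFunctions E} {p : E} {M : ℕ}
    (h : VanishesToOrder F p M) (hM : 0 < M) : F p = 0 := h [] hM

theorem VanishesToOrder.mono {F : entireFunctions E} {p : E} {M N : ℕ}
    (h : VanishesToOrder F p M) (hN : N ≤ M) : VanishesToOrder F p N :=
  fun l hl => h l (hl.trans_le hN)

protected theorem VanishesToOrder.iterDerivation {F : entireFunctions E} {p : E} {M N : ℕ}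
    {l : List E} (h : VanishesToOrder F p M) (hl : N + l.length ≤ M) :
    VanishesToOrder (iterDerivation dirDeriv l F) p N := fun l' hl' => by
  rw [← iterDerivation_append]
  exact h _ (by rw [List.length_append]; lia)

protected theorem VanishesToOrder.compAffine {F : entireFunctions E} {b : E} {A : E' →L[ℂ] E}
    {t : E'} {M : ℕ} (h : VanishesToOrder F (b + A t) M) : VanishesToOrder (compAffine b A F) t M :=
  fun l hl => by
    rw [iterDerivation_dirDeriv_compAffine]
    exact h _ (by rwa [List.length_map])

theorem VanishesToOrder.sum_smul {ι : Type*} {s : Finset ι} {c : ι → ℂ}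
    {G : ι → entireFunctions E} {p : E} {M : ℕ} (h : ∀ i ∈ s, VanishesToOrder (G i) p M) :
    VanishesToOrder (∑ i ∈ s, c i • G i) p M := fun l hl => by
  rw [← evalAt_apply, map_sum, map_sum]
  exact Finset.sum_eq_zero fun i hi => by simp [h i hi l hl]

theorem eq_zero_of_forall_vanishesToOrder {F : entireFunctions E} {p : E}
    (h : ∀ M, VanishesToOrder F p M) : F = 0 := by
  refine Subtype.ext (funext fun z => ?_)
  have hTaylor := Complex.taylorSeries_eq_of_entire (differentiable (restrictLine p (z - p) F)) 0 1
  simp only [iteratedDeriv_restrictLine] at hTaylor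
  simpa [h _ _ (Nat.lt_succ_self _)] using hTaylor.symm

theorem vanishesToOrder_of_span_eq_top {ι : Type*} {v : ι → E}
    (hv : Submodule.span ℂ (Set.range v) = ⊤) {F : entireFunctions E} {p : E} {M : ℕ}
    (h : ∀ w : List ι, w.length < M → iterDerivation (fun i => dirDeriv (v i)) w F p = 0) :
    VanishesToOrder F p M := by
  suffices H : ∀ (l : List E) (w : List ι), w.length + l.length < M →
      iterDerivation dirDeriv (w.map v ++ l) F p = 0 from
    fun l hl => H l [] (by simpa using hl)
  intro l
  induction l with
  | nil =>
    intro w hw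
    rw [List.append_nil, iterDerivation_map]
    exact h w hw
  | cons x l ih =>
    intro w hw
    let φ : E →ₗ[ℂ] ℂ :=
      { toFun := fun y => iterDerivation dirDeriv (w.map v)
          (dirDeriv y (iterDerivation dirDeriv l F)) p
        map_add' := fun y z => by simp
        map_smul' := fun c y => by simp }
    have hφ : φ = 0 := LinearMap.ext_on_range hv fun i => by
      simpa [φ, iterDerivation_append] using ih (w ++ [i]) (by simp at hw ⊢; lia)
    simpa [φ, iterDerivation_append] using LinearMap.congr_fun hφ x

theorem exists_iterDerivation_ne_zero_of_forall_vanishesToOrder {P ι : Type*} [Nonempty P]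
    {v : ι → E} (hv : Submodule.span ℂ (Set.range v) = ⊤) (p : P → E) {F : entireFunctions E}
    (hF : F ≠ 0) :
    ∃ (q : P) (w : List ι), iterDerivation (fun i => dirDeriv (v i)) w F (p q) ≠ 0 ∧
      ∀ q', VanishesToOrder F (p q') w.length := by
  classical
  have hex : ∃ X, ∃ (q : P) (w : List ι), w.length = X ∧
      iterDerivation (fun i => dirDeriv (v i)) w F (p q) ≠ 0 := by
    contrapose! hF
    exact eq_zero_of_forall_vanishesToOrder fun M =>
      vanishesToOrder_of_span_eq_top hv fun w _ => hF _ (Classical.arbitrary P) w rfl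
  obtain ⟨q, w, hw, hne⟩ := Nat.find_spec hex
  refine ⟨q, w, hne, fun q' => vanishesToOrder_of_span_eq_top hv fun w' hw' => ?_⟩
  have hmin := Nat.find_min hex (hw ▸ hw')
  push Not at hmin
  exact hmin q' w' rfl

end entireFunctions

end EntireFunctions

/-! ### Hermite interpolation in one variable -/

section Interpolation

namespace entireFunctions

/-- The divided difference `x ↦ (g x - g a) / (x - a)`, as a linear operator on entire functions. -/
noncomputable def dividedDifference (a : ℂ) : Module.End ℂ (entireFunctions ℂ) where
  toFun g := ⟨dslope g a, mem_iff.2 <| Differentiable.contDiff <| differentiableOn_univ.1 <|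
    (Complex.differentiableOn_dslope Filter.univ_mem).2 (differentiable g).differentiableOn⟩
  map_add' g h := Subtype.ext <| funext fun x => by
    rcases eq_or_ne x a with rfl | hx
    · simp [dslope_same, deriv_add (differentiable g x) (differentiable h x)]
    · simp only [Subalgebra.coe_add, Pi.add_apply, dslope_of_ne _ hx, slope_def_field]
      ring
  map_smul' c g := Subtype.ext <| funext fun x => by
    rcases eq_or_ne x a with rfl | hx
    · simp [dslope_same, deriv_const_smul c (differentiable g x)]
    · simp only [Subalgebra.coe_smul, Pi.smul_apply, dslope_of_ne _ hx, slope_def_field,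
        smul_eq_mul, RingHom.id_apply]
      ring

theorem sub_mul_dividedDifference (g : entireFunctions ℂ) (a x : ℂ) :
    (x - a) * dividedDifference a g x = g x - g a := sub_smul_dslope g a x

theorem norm_dividedDifference_le {g : entireFunctions ℂ} {r R M : ℝ} (hR : r < R) {a : ℂ}
    (ha : ‖a‖ ≤ r) (hM : ∀ x, ‖x‖ ≤ R → ‖g x‖ ≤ M) {x : ℂ} (hx : ‖x‖ ≤ R) :
    ‖dividedDifference a g x‖ ≤ 2 / (R - r) * M := by
  have hR0 : R ≠ 0 := (((norm_nonneg a).trans ha).trans_lt hR).ne'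
  refine Complex.norm_le_of_forall_mem_frontier_norm_le (U := Metric.ball (0 : ℂ) R)
    Metric.isBounded_ball (differentiable (dividedDifference a g)).diffContOnCl (fun w hw => ?_)
    (by rwa [closure_ball _ hR0, mem_closedBall_zero_iff])
  rw [frontier_ball _ hR0, mem_sphere_zero_iff_norm] at hw
  have hwa : R - r ≤ ‖w - a‖ := by linarith [norm_sub_norm_le w a]
  have hnum : ‖g w - g a‖ ≤ 2 * M := by
    linarith [norm_sub_le (g w) (g a), hM w hw.le, hM a (by linarith)]
  have hprod : (R - r) * ‖dividedDifference a g w‖ ≤ 2 * M :=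
    calc (R - r) * ‖dividedDifference a g w‖ ≤ ‖w - a‖ * ‖dividedDifference a g w‖ := by gcongr
      _ = ‖g w - g a‖ := by rw [← norm_mul, sub_mul_dividedDifference]
      _ ≤ 2 * M := hnum
  rw [div_mul_eq_mul_div, le_div_iff₀ (sub_pos.2 hR)]
  linarith

/-- The error at `z` of the Hermite interpolation of an entire function at a list of nodes,
through Newton's formula: the product of the `z - a`, times a divided difference. -/
noncomputable def interpolationError (z : ℂ) : List ℂ → entireFunctions ℂ →ₗ[ℂ] ℂ
  | [] => (evalAt z).toLinearMap
  | a :: l => (z - a) • interpolationError z l ∘ₗ dividedDifference a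

theorem norm_interpolationError_le {r R : ℝ} (hR : r < R) {l : List ℂ} (hl : ∀ a ∈ l, ‖a‖ ≤ r)
    {z : ℂ} (hz : ‖z‖ ≤ r) {g : entireFunctions ℂ} {M : ℝ} (hM : ∀ x, ‖x‖ ≤ R → ‖g x‖ ≤ M) :
    ‖interpolationError z l g‖ ≤ (4 * r / (R - r)) ^ l.length * M := by
  induction l generalizing g M with
  | nil => simpa [interpolationError] using hM z (hz.trans hR.le)
  | cons a l ih =>
    have ha : ‖a‖ ≤ r := hl a List.mem_cons_self
    have hr : 0 ≤ r := (norm_nonneg z).trans hz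
    have : 0 < R - r := sub_pos.2 hR
    have htail := ih (fun b hb => hl b (List.mem_cons_of_mem _ hb))
      fun x hx => norm_dividedDifference_le hR ha hM hx
    calc ‖interpolationError z (a :: l) g‖
        = ‖z - a‖ * ‖interpolationError z l (dividedDifference a g)‖ := norm_mul _ _
      _ ≤ (2 * r) * ((4 * r / (R - r)) ^ l.length * (2 / (R - r) * M)) := by
          gcongr
          linarith [norm_sub_le z a]
      _ = (4 * r / (R - r)) ^ (a :: l).length * M := by
          rw [List.length_cons, pow_succ]
          ring

theorem interpolationError_eq_apply (z : ℂ) {l : List ℂ} {g : entireFunctions ℂ}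
    (h : ∀ x, (l.count x : ℕ∞) ≤ analyticOrderAt g x) : interpolationError z l g = g z := by
  induction l generalizing g with
  | nil => rfl
  | cons a l ih =>
    have hga : g a = 0 := apply_eq_zero_of_analyticOrderAt_ne_zero fun h0 => by
      simpa [h0] using h a
    have hfac : (g : ℂ → ℂ) = (· - a) * dividedDifference a g :=
      funext fun x => by simp [sub_mul_dividedDifference, hga]
    have hcount (x : ℂ) : (l.count x : ℕ∞) ≤ analyticOrderAt (dividedDifference a g) x := by
      have hx := h x
      rw [hfac, analyticOrderAt_mul (by fun_prop)
        ((differentiable (dividedDifference a g)).analyticAt x)] at hx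
      rcases eq_or_ne x a with rfl | hxa
      · rw [analyticOrderAt_id_sub_const_self, List.count_cons_self, Nat.cast_add, Nat.cast_one,
          add_comm] at hx
        exact (ENat.add_le_add_iff_left (by simp)).1 hx
      · rwa [analyticOrderAt_id_sub_const_of_ne hxa, zero_add, List.count_cons_of_ne hxa.symm] at hx
    calc interpolationError z (a :: l) g
        = (z - a) * interpolationError z l (dividedDifference a g) := rfl
      _ = g z := by rw [ih hcount, sub_mul_dividedDifference, hga, sub_zero]

-- The interpolation error vanishes on the common kernel of the functionals
-- `g ↦ iteratedDeriv k g a`, hence the value at `z` differs from it by a combination of these.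
theorem exists_norm_sub_sum_iteratedDeriv_le (Z : Finset ℂ) (T : ℕ) {r R : ℝ}
    (hZ : ∀ a ∈ Z, ‖a‖ ≤ r) (hR : r < R) {z : ℂ} (hz : ‖z‖ ≤ r) :
    ∃ c : Z × Fin T → ℂ, ∀ (g : entireFunctions ℂ) (M : ℝ), (∀ x, ‖x‖ ≤ R → ‖g x‖ ≤ M) →
      ‖g z - ∑ p, c p * iteratedDeriv p.2 g p.1‖ ≤ (4 * r / (R - r)) ^ (T * Z.card) * M := by
  classical
  let l : List ℂ := (T • Z.val).toList
  have hmem (a : ℂ) (ha : a ∈ l) : a ∈ Z := Multiset.mem_of_mem_nsmul (Multiset.mem_toList.1 ha)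
  have hcount (a : ℂ) : l.count a ≤ T := by
    rw [← Multiset.coe_count, Multiset.coe_toList, Multiset.count_nsmul]
    exact mul_le_of_le_one_right' (Multiset.nodup_iff_count_le_one.1 Z.nodup a)
  let Λ : entireFunctions ℂ →ₗ[ℂ] ℂ := (evalAt z).toLinearMap - interpolationError z l
  let L (p : Z × Fin T) : entireFunctions ℂ →ₗ[ℂ] ℂ :=
    (evalAt (p.1 : ℂ)).toLinearMap ∘ₗ iterDerivation dirDeriv (List.replicate p.2 1)
  have hL (p : Z × Fin T) (g : entireFunctions ℂ) : L p g = iteratedDeriv p.2 g p.1 := by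
    simp [L, iteratedDeriv_eq_iterDerivation]
  have hspan : Λ ∈ Submodule.span ℂ (Set.range L) := by
    refine mem_span_of_iInf_ker_le_ker fun g hg => sub_eq_zero.2
      (interpolationError_eq_apply z fun a => ?_).symm
    simp only [Submodule.mem_iInf, LinearMap.mem_ker, hL] at hg
    by_cases ha : a ∈ l
    · refine (Nat.cast_le.2 (hcount a)).trans ?_
      rw [natCast_le_analyticOrderAt_iff_iteratedDeriv_eq_zero ((differentiable g).analyticAt a)]
      exact fun k hk => hg (⟨a, hmem a ha⟩, ⟨k, hk⟩)
    · simp [List.count_eq_zero_of_not_mem ha]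
  obtain ⟨c, hc⟩ := (Submodule.mem_span_range_iff_exists_fun ℂ).1 hspan
  refine ⟨c, fun g M hM => ?_⟩
  have hsum : ∑ p, c p * iteratedDeriv p.2 g p.1 = g z - interpolationError z l g := by
    simpa [Λ, hL] using LinearMap.congr_fun hc g
  have hlen : l.length = T * Z.card := by simp [l]
  rw [hsum, sub_sub_cancel, ← hlen]
  exact norm_interpolationError_le hR (fun a ha => hZ a (hmem a ha)) hz hM

end entireFunctions

end Interpolation

/-! ### A Schwarz lemma for functions vanishing on a Cartesian grid -/

section GridSchwarz

variable {ι : Type*} [Fintype ι] [DecidableEq ι]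

namespace entireFunctions

/-- The linear projection of `ℂ^ι` that replaces the coordinate `j` by `0`. -/
noncomputable def eraseCoord (j : ι) : (ι → ℂ) →L[ℂ] (ι → ℂ) :=
  ContinuousLinearMap.pi fun i => if i = j then 0 else ContinuousLinearMap.proj i

omit [Fintype ι] in
theorem smul_single_add_eraseCoord (j : ι) (x : ℂ) (t : ι → ℂ) :
    x • Pi.single j (1 : ℂ) + eraseCoord j t = Function.update t j x := by
  funext i
  rcases eq_or_ne i j with rfl | h
  · simp [eraseCoord]
  · simp [eraseCoord, h]

theorem norm_update_le {t : ι → ℂ} {R : ℝ} (ht : ‖t‖ ≤ R) (j : ι) {x : ℂ} (hx : ‖x‖ ≤ R) :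
    ‖Function.update t j x‖ ≤ R := by
  refine (pi_norm_le_iff_of_nonneg ((norm_nonneg x).trans hx)).2 fun i => ?_
  rcases eq_or_ne i j with rfl | h
  · simpa using hx
  · simpa [h] using (norm_le_pi_norm t i).trans ht

-- One variable at a time: `H` interpolates `F` in the variable `j`, and then no longer depends
-- on it.
theorem exists_interpolation_in_coord (Z : Finset ℂ) (T : ℕ) {r R : ℝ} (hZ : ∀ a ∈ Z, ‖a‖ ≤ r)
    (hR : r < R) (j : ι) {a : ℂ} (ha : ‖a‖ ≤ r) (F : entireFunctions (ι → ℂ)) {M : ℝ}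
    (hM : ∀ t, ‖t‖ ≤ R → ‖F t‖ ≤ M) :
    ∃ H : entireFunctions (ι → ℂ),
      (∀ t, ‖t‖ ≤ R → ‖F (Function.update t j a) - H t‖ ≤
        (4 * r / (R - r)) ^ (T * Z.card) * M) ∧
      ∀ t N, (∀ x ∈ Z, VanishesToOrder F (Function.update t j x) (N + T)) →
        VanishesToOrder H t N := by
  obtain ⟨c, hc⟩ := exists_norm_sub_sum_iteratedDeriv_le Z T hZ hR ha
  let e : ι → ℂ := Pi.single j 1
  let G (p : Z × Fin T) : entireFunctions (ι → ℂ) :=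
    compAffine ((p.1 : ℂ) • e) (eraseCoord j) (iterDerivation dirDeriv (List.replicate p.2 e) F)
  have hline (t : ι → ℂ) (x : ℂ) : eraseCoord j t + x • e = Function.update t j x := by
    rw [add_comm, smul_single_add_eraseCoord]
  refine ⟨∑ p, c p • G p, fun t ht => ?_, fun t N hN => VanishesToOrder.sum_smul fun p _ => ?_⟩
  · have hbound := hc (restrictLine (eraseCoord j t) e F) M fun x hx => by
      rw [restrictLine_apply, hline]
      exact hM _ (norm_update_le ht j hx)
    have hsum : (∑ p, c p • G p : entireFunctions (ι → ℂ)) t =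
        ∑ p : Z × Fin T, c p * iteratedDeriv p.2 (restrictLine (eraseCoord j t) e F) p.1 := by
      simp only [iteratedDeriv_restrictLine]
      rw [← evalAt_apply, map_sum]
      simp [G, add_comm]
    rwa [hsum, ← hline, ← restrictLine_apply]
  · refine VanishesToOrder.compAffine ?_
    rw [smul_single_add_eraseCoord]
    refine (hN p.1 p.1.2).iterDerivation ?_
    rw [List.length_replicate]
    exact Nat.add_le_add_left p.2.2.le N

omit [DecidableEq ι] in
theorem norm_le_of_vanishesToOrder_of_coord_mem {Z : Finset ℂ} {T : ℕ} {r R : ℝ}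
    (hZ : ∀ a ∈ Z, ‖a‖ ≤ r) (hR : r < R) (hη : 4 * r / (R - r) ≤ 1) {z : ι → ℂ} (hz : ‖z‖ ≤ r)
    (J : Finset ι) {F : entireFunctions (ι → ℂ)} {M : ℝ} (hM : ∀ t, ‖t‖ ≤ R → ‖F t‖ ≤ M)
    (hF : ∀ t : ι → ℂ, (∀ i ∈ J, t i ∈ Z) → VanishesToOrder F t (J.card * T + 1)) :
    ‖F z‖ ≤ 3 ^ J.card * ((4 * r / (R - r)) ^ (T * Z.card) * M) := by
  have : 0 < R - r := sub_pos.2 hR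
  have hr : 0 ≤ r := (norm_nonneg z).trans hz
  set η := (4 * r / (R - r)) ^ (T * Z.card)
  have hη1 : η ≤ 1 := pow_le_one₀ (by positivity) hη
  classical
  induction J using Finset.induction_on generalizing F M with
  | empty =>
    have hM0 : 0 ≤ M := (norm_nonneg _).trans (hM z (hz.trans hR.le))
    rw [(hF z (by simp)).apply_eq_zero (by simp), norm_zero]
    positivity
  | insert j J hj ih =>
    have hM0 : 0 ≤ M := (norm_nonneg _).trans (hM z (hz.trans hR.le))
    have hzj : ‖z j‖ ≤ r := (norm_le_pi_norm z j).trans hz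
    obtain ⟨H, happrox, hvanish⟩ := exists_interpolation_in_coord Z T hZ hR j hzj F hM
    have hHM (t : ι → ℂ) (ht : ‖t‖ ≤ R) : ‖H t‖ ≤ 2 * M := by
      have hupdate := hM _ (norm_update_le ht j (hzj.trans hR.le))
      have htri := norm_sub_le (F (Function.update t j (z j)))
        (F (Function.update t j (z j)) - H t)
      rw [sub_sub_cancel] at htri
      linarith [happrox t ht, mul_le_of_le_one_left hM0 hη1]
    have hHF (t : ι → ℂ) (ht : ∀ i ∈ J, t i ∈ Z) : VanishesToOrder H t (J.card * T + 1) := by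
      refine hvanish t _ fun x hx => (hF _ fun i hi => ?_).mono ?_
      · rcases eq_or_ne i j with rfl | hij
        · simpa using hx
        · simpa [hij] using ht i (Finset.mem_of_mem_insert_of_ne hi hij)
      · rw [Finset.card_insert_of_notMem hj, add_one_mul]
        lia
    have hz' := happrox z (hz.trans hR.le)
    rw [Function.update_eq_self] at hz'
    have h3 : (1 : ℝ) ≤ 3 ^ J.card := one_le_pow₀ (by norm_num)
    rw [Finset.card_insert_of_notMem hj, pow_succ]
    calc ‖F z‖ ≤ ‖F z - H z‖ + ‖H z‖ := norm_le_norm_sub_add _ _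
      _ ≤ η * M + 3 ^ J.card * (η * (2 * M)) := add_le_add hz' (ih hHM hHF)
      _ ≤ 3 ^ J.card * 3 * (η * M) := by
        nlinarith [mul_le_mul_of_nonneg_right h3 (by positivity : 0 ≤ η * M)]

end entireFunctions

end GridSchwarz

/-! ### Houses of algebraic integers -/

section House

open NumberField

theorem house_zero {K : Type*} [Field K] [NumberField K] : house (0 : K) = 0 := by
  simpa using house_intCast (K := K) 0

theorem house_one {K : Type*} [Field K] [NumberField K] : house (1 : K) = 1 := by
  simpa using house_intCast (K := K) 1

theorem house_finsuppProd_pow_le {K σ : Type*} [Field K] [NumberField K] {a : σ → K} {B : ℝ}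
    (ha : ∀ j, house (a j) ≤ B) (u : σ →₀ ℕ) :
    house (u.prod fun j e => a j ^ e) ≤ B ^ u.degree := by
  classical
  rw [Finsupp.prod, Finsupp.degree_apply]
  induction u.support using Finset.induction_on with
  | empty => simp [house_one]
  | insert j s hj ih =>
    have hB : 0 ≤ B := (house_nonneg _).trans (ha j)
    rw [Finset.prod_insert hj, Finset.sum_insert hj, pow_add]
    refine (house_mul_le _ _).trans (mul_le_mul ?_ ih (house_nonneg _) (by positivity))
    exact (house_pow_le _ _).trans (pow_le_pow_left₀ (house_nonneg _) (ha j) _)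

theorem one_le_norm_algebraMap_mul_house_pow {K : Type*} [Field K] [NumberField K] [Algebra K ℂ]
    {γ : 𝓞 K} (hγ : γ ≠ 0) :
    1 ≤ ‖algebraMap (𝓞 K) ℂ γ‖ * house (algebraMap _ K γ) ^ (Module.finrank ℚ K - 1) := by
  obtain ⟨k, hk⟩ : ∃ k : ℤ, (k : ℚ) = Algebra.norm ℚ (algebraMap _ K γ) :=
    IsIntegrallyClosed.isIntegral_iff.1
      (Algebra.isIntegral_norm ℚ (RingOfIntegers.isIntegral_coe γ))
  have hk0 : k ≠ 0 := by
    rintro rfl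
    exact Algebra.norm_ne_zero_iff.2 (RingOfIntegers.coe_ne_zero_iff.2 hγ)
      (hk.symm.trans Int.cast_zero)
  calc (1 : ℝ) ≤ |(k : ℝ)| := by exact_mod_cast Int.one_le_abs hk0
    _ = ‖Algebra.norm ℚ (algebraMap _ K γ)‖ := by rw [← hk, ← Rat.norm_cast_real]; simp
    _ ≤ _ := norm_norm_le_norm_mul_house_pow (algebraMap _ K γ) (algebraMap K ℂ)

theorem mul_rpow_le_mul_mul {c C x e : ℝ} (hc : |c| ≤ C) (hC : 1 ≤ C) (hx : 1 ≤ x) (he : 0 ≤ e)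
    (he1 : e ≤ 1) : c * (c * x) ^ e ≤ C * (C * x) :=
  calc c * (c * x) ^ e ≤ |c| * |c * x| ^ e :=
        (le_abs_self _).trans <| (abs_mul _ _).trans_le <| by
          gcongr
          exact Real.abs_rpow_le_abs_rpow _ _
    _ = |c| * (|c| * x) ^ e := by rw [abs_mul, abs_of_nonneg (zero_le_one.trans hx)]
    _ ≤ C * (C * x) ^ e := by gcongr
    _ ≤ C * (C * x) := by
        gcongr
        exact Real.rpow_le_self_of_one_le (one_le_mul_of_one_le_of_one_le hC hx) he1

theorem exists_siegel_constant.{u, v, w} (K : Type u) [Field K] [NumberField K] :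
    ∃ C : ℝ, 1 ≤ C ∧ ∀ {α : Type v} {β : Type w} [Fintype α] [Fintype β]
      (a : Matrix α β (𝓞 K)) {A : ℝ}, 1 ≤ A → Nonempty β → 2 * Fintype.card α ≤ Fintype.card β →
      (∀ k l, house (algebraMap _ K (a k l)) ≤ A) →
      ∃ ξ : β → 𝓞 K, ξ ≠ 0 ∧ a.mulVec ξ = 0 ∧
        ∀ l, house (algebraMap _ K (ξ l)) ≤ C * (C * (Fintype.card β * A)) := by
  classical
  obtain ⟨c, hc⟩ : ∃ c : ℝ, ∀ {α : Type v} {β : Type w} [Fintype α] [Fintype β]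
      (a : Matrix α β (𝓞 K)) {A : ℝ}, a ≠ 0 → 0 < Fintype.card α → Fintype.card α < Fintype.card β →
      (∀ k l, house (algebraMap _ K (a k l)) ≤ A) →
      ∃ ξ : β → 𝓞 K, ξ ≠ 0 ∧ a.mulVec ξ = 0 ∧ ∀ l, house (algebraMap _ K (ξ l)) ≤
        c * ((c * Fintype.card β * A) ^
          ((Fintype.card α : ℝ) / (Fintype.card β - Fintype.card α))) :=
    ⟨_, fun a _ ha hα hαβ hA => house.exists_ne_zero_int_vec_house_le K a ha hα hαβ rfl hA rfl⟩
  refine ⟨max 1 |c|, le_max_left _ _, fun {α β} _ _ a {A} hA hβ hcard ha => ?_⟩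
  have hβ1 : (1 : ℝ) ≤ Fintype.card β := Nat.one_le_cast.2 Fintype.card_pos
  have hx : (1 : ℝ) ≤ Fintype.card β * A := one_le_mul_of_one_le_of_one_le hβ1 hA
  have hC : 1 ≤ max 1 |c| := le_max_left _ _
  rcases eq_or_ne a 0 with rfl | ha0
  · refine ⟨1, one_ne_zero, Matrix.zero_mulVec _, fun l => ?_⟩
    rw [Pi.one_apply, map_one, house_one]
    exact one_le_mul_of_one_le_of_one_le hC (one_le_mul_of_one_le_of_one_le hC hx)
  · have hα : 0 < Fintype.card α := Fintype.card_pos_iff.2 <| by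
      by_contra hempty
      rw [not_nonempty_iff] at hempty
      exact ha0 (Subsingleton.elim _ _)
    have hα' : (0 : ℝ) < Fintype.card α := Nat.cast_pos.2 hα
    have hcard' : 2 * (Fintype.card α : ℝ) ≤ Fintype.card β := by exact_mod_cast hcard
    obtain ⟨ξ, hξ0, hξ, hbound⟩ := hc a ha0 hα (by lia) ha
    refine ⟨ξ, hξ0, hξ, fun l => (hbound l).trans ?_⟩
    rw [mul_assoc c]
    refine mul_rpow_le_mul_mul (le_max_right _ _) hC hx (div_nonneg hα'.le (by linarith)) ?_
    rw [div_le_one (by linarith)]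
    linarith

end House

/-! ### Derivatives and values of polynomials -/

section PolynomialDerivations

open MvPolynomial

variable {R σ : Type*} [CommSemiring R]

theorem mkDerivation_eq_sum_monomial_mul (p : σ → MvPolynomial σ R)
    (G : MvPolynomial σ R) :
    mkDerivation R p G = ∑ u ∈ G.support, ∑ i ∈ u.support,
      monomial (u - Finsupp.single i 1) (G.coeff u * u i) * p i := by
  conv_lhs => rw [G.as_sum, map_sum]
  refine Finset.sum_congr rfl fun u _ => ?_
  rw [mkDerivation_monomial, Finsupp.sum, Finset.smul_sum]
  refine Finset.sum_congr rfl fun i _ => ?_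
  rw [smul_eq_mul, ← smul_mul_assoc, smul_monomial, smul_eq_mul]

theorem totalDegree_mkDerivation_le_s3 {p : σ → MvPolynomial σ R} {δ : ℕ}
    (hp : ∀ i, (p i).totalDegree ≤ δ) (G : MvPolynomial σ R) :
    (mkDerivation R p G).totalDegree ≤ G.totalDegree + δ := by
  rw [mkDerivation_eq_sum_monomial_mul]
  refine totalDegree_finsetSum_le fun u hu => totalDegree_finsetSum_le fun i _ => ?_
  refine (totalDegree_mul _ _).trans (add_le_add ((totalDegree_monomial_le _ _).trans ?_) (hp i))
  exact (Finsupp.degree_mono tsub_le_self).trans (le_totalDegree hu)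

theorem totalDegree_iterDerivation_mkDerivation_le {ι : Type*} {p : ι → σ → MvPolynomial σ R}
    {δ : ℕ} (hp : ∀ ν i, (p ν i).totalDegree ≤ δ) (w : List ι) (G : MvPolynomial σ R) :
    (iterDerivation (fun ν => mkDerivation R (p ν)) w G).totalDegree ≤
      G.totalDegree + w.length * δ := by
  induction w with
  | nil => simp
  | cons ν w ih =>
    rw [iterDerivation_cons, List.length_cons, add_one_mul, ← add_assoc]
    exact (totalDegree_mkDerivation_le_s3 (hp ν) _).trans (Nat.add_le_add_right ih δ)

theorem aeval_eq_sum_coeff_mul_prod {A : Type*} [CommSemiring A] [Algebra R A] (x : σ → A)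
    (G : MvPolynomial σ R) :
    aeval x G = ∑ u ∈ G.support, algebraMap R A (G.coeff u) * u.prod fun j e => x j ^ e := by
  rw [aeval_def, eval₂_eq]
  rfl

end PolynomialDerivations

/-! ### Polynomials with algebraic integer coefficients -/

section HouseLength

open NumberField MvPolynomial

variable {K σ : Type*} [Field K] [NumberField K]

/-- The sum of the houses of the coefficients of a polynomial, a submultiplicative measure of its
height. -/
noncomputable def houseLength (G : MvPolynomial σ (𝓞 K)) : ℝ :=
  ∑ u ∈ G.support, house (algebraMap _ K (G.coeff u))

theorem houseLength_nonneg (G : MvPolynomial σ (𝓞 K)) : 0 ≤ houseLength G :=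
  Finset.sum_nonneg fun _ _ => house_nonneg _

theorem houseLength_eq_sum {G : MvPolynomial σ (𝓞 K)} {s : Finset (σ →₀ ℕ)}
    (hs : G.support ⊆ s) : houseLength G = ∑ u ∈ s, house (algebraMap _ K (G.coeff u)) :=
  Finset.sum_subset hs fun u _ hu => by rw [notMem_support_iff.1 hu, map_zero, house_zero]

theorem houseLength_add_le (G H : MvPolynomial σ (𝓞 K)) :
    houseLength (G + H) ≤ houseLength G + houseLength H := by
  classical
  rw [houseLength_eq_sum support_add,
    houseLength_eq_sum (Finset.subset_union_left (s₁ := G.support) (s₂ := H.support)),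
    houseLength_eq_sum (Finset.subset_union_right (s₁ := G.support) (s₂ := H.support)),
    ← Finset.sum_add_distrib]
  refine Finset.sum_le_sum fun u _ => ?_
  rw [coeff_add, map_add]
  exact house_add_le _ _

theorem houseLength_sum_le {ι : Type*} (s : Finset ι) (G : ι → MvPolynomial σ (𝓞 K)) :
    houseLength (∑ i ∈ s, G i) ≤ ∑ i ∈ s, houseLength (G i) :=
  Finset.le_sum_of_subadditive _ (by simp [houseLength]) houseLength_add_le _ _

theorem houseLength_monomial (u : σ →₀ ℕ) (c : 𝓞 K) :
    houseLength (monomial u c) = house (algebraMap _ K c) := by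
  classical
  rw [houseLength_eq_sum (s := {u}) support_monomial_subset]
  simp

theorem houseLength_mul_le (G H : MvPolynomial σ (𝓞 K)) :
    houseLength (G * H) ≤ houseLength G * houseLength H := by
  have hexpand : G * H = ∑ u ∈ G.support, ∑ w ∈ H.support,
      monomial (u + w) (G.coeff u * H.coeff w) := by
    conv_lhs => rw [G.as_sum, H.as_sum, Finset.sum_mul_sum]
    simp only [monomial_mul]
  rw [hexpand, houseLength.eq_1 G, houseLength.eq_1 H, Finset.sum_mul_sum]
  refine (houseLength_sum_le _ _).trans (Finset.sum_le_sum fun u _ =>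
    (houseLength_sum_le _ _).trans (Finset.sum_le_sum fun w _ => ?_))
  rw [houseLength_monomial, map_mul]
  exact house_mul_le _ _

theorem houseLength_mkDerivation_le {p : σ → MvPolynomial σ (𝓞 K)} {C : ℝ} (hC : 0 ≤ C)
    (hp : ∀ i, houseLength (p i) ≤ C) (G : MvPolynomial σ (𝓞 K)) :
    houseLength (mkDerivation (𝓞 K) p G) ≤ C * G.totalDegree * houseLength G := by
  have hterm (u : σ →₀ ℕ) (i : σ) :
      houseLength (monomial (u - Finsupp.single i 1) (G.coeff u * u i) * p i) ≤
        u i * (house (algebraMap _ K (G.coeff u)) * C) := by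
    refine (houseLength_mul_le _ _).trans ?_
    rw [houseLength_monomial, mul_comm (G.coeff u), map_mul, map_natCast, house_nat_mul,
      mul_assoc]
    have := house_nonneg (algebraMap _ K (G.coeff u))
    gcongr
    exact hp i
  rw [mkDerivation_eq_sum_monomial_mul, houseLength.eq_1 G, Finset.mul_sum]
  refine (houseLength_sum_le _ _).trans (Finset.sum_le_sum fun u hu => ?_)
  have hdeg : ∑ i ∈ u.support, (u i : ℝ) ≤ G.totalDegree := by exact_mod_cast le_totalDegree hu
  have := house_nonneg (algebraMap _ K (G.coeff u))
  calc houseLength (∑ i ∈ u.support, monomial (u - Finsupp.single i 1) (G.coeff u * u i) * p i)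
      ≤ ∑ i ∈ u.support, u i * (house (algebraMap _ K (G.coeff u)) * C) :=
        (houseLength_sum_le _ _).trans (Finset.sum_le_sum fun i _ => hterm u i)
    _ ≤ G.totalDegree * (house (algebraMap _ K (G.coeff u)) * C) := by rw [← Finset.sum_mul]; gcongr
    _ = C * G.totalDegree * house (algebraMap _ K (G.coeff u)) := by ring

theorem houseLength_iterDerivation_mkDerivation_le {ι : Type*}
    {p : ι → σ → MvPolynomial σ (𝓞 K)} {δ : ℕ} {C : ℝ} (hδ : ∀ ν i, (p ν i).totalDegree ≤ δ)
    (hC : 0 ≤ C) (hp : ∀ ν i, houseLength (p ν i) ≤ C) (w : List ι) (G : MvPolynomial σ (𝓞 K))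
    {N : ℕ} (hN : G.totalDegree + w.length * δ ≤ N) :
    houseLength (iterDerivation (fun ν => mkDerivation (𝓞 K) (p ν)) w G) ≤
      (C * N) ^ w.length * houseLength G := by
  induction w with
  | nil => simp
  | cons ν w ih =>
    have hN' : G.totalDegree + w.length * δ ≤ N :=
      le_trans (by gcongr; simp) hN
    have hdeg : ((iterDerivation (fun ν => mkDerivation (𝓞 K) (p ν)) w G).totalDegree : ℝ) ≤ N :=
      Nat.cast_le.2 ((totalDegree_iterDerivation_mkDerivation_le hδ w G).trans hN')
    rw [iterDerivation_cons, List.length_cons, pow_succ', mul_assoc]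
    refine (houseLength_mkDerivation_le hC (hp ν) _).trans ?_
    have := houseLength_nonneg (iterDerivation (fun ν => mkDerivation (𝓞 K) (p ν)) w G)
    gcongr
    exact ih hN'

end HouseLength

section PolynomialValues

open NumberField MvPolynomial

variable {K σ : Type*} [Field K] [NumberField K] [Algebra K ℂ]

theorem norm_aeval_le {x : σ → ℂ} {Y : ℝ} (hY : 1 ≤ Y) (hx : ∀ j, ‖x j‖ ≤ Y)
    {G : MvPolynomial σ (𝓞 K)} {M : ℕ} (hG : G.totalDegree ≤ M) :
    ‖aeval x G‖ ≤ houseLength G * Y ^ M := by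
  rw [aeval_eq_sum_coeff_mul_prod, houseLength, Finset.sum_mul]
  refine (norm_sum_le _ _).trans (Finset.sum_le_sum fun u hu => ?_)
  have hcoeff : ‖algebraMap (𝓞 K) ℂ (G.coeff u)‖ ≤ house (algebraMap _ K (G.coeff u)) :=
    norm_embedding_le_house (algebraMap _ K (G.coeff u)) (algebraMap K ℂ)
  have hmonomial : ‖u.prod fun j e => x j ^ e‖ ≤ Y ^ M :=
    calc ‖u.prod fun j e => x j ^ e‖ = ∏ j ∈ u.support, ‖x j‖ ^ u j := by
          simp [Finsupp.prod, norm_prod]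
      _ ≤ ∏ j ∈ u.support, Y ^ u j := by
          gcongr with j
          exact hx j
      _ = Y ^ u.degree := Finset.prod_pow_eq_pow_sum _ _ _
      _ ≤ Y ^ M := pow_le_pow_right₀ hY ((le_totalDegree hu).trans hG)
  rw [norm_mul]
  exact mul_le_mul hcoeff hmonomial (norm_nonneg _) (house_nonneg _)

theorem exists_algebraMap_eq_pow_mul_aeval {x : σ → ℂ} {b : 𝓞 K} {a : σ → 𝓞 K}
    (ha : ∀ j, algebraMap (𝓞 K) ℂ (a j) = algebraMap (𝓞 K) ℂ b * x j) {B : ℝ}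
    (hb : house (algebraMap _ K b) ≤ B) (haB : ∀ j, house (algebraMap _ K (a j)) ≤ B)
    {G : MvPolynomial σ (𝓞 K)} {M : ℕ} (hG : G.totalDegree ≤ M) :
    ∃ γ : 𝓞 K, algebraMap (𝓞 K) ℂ γ = algebraMap (𝓞 K) ℂ b ^ M * aeval x G ∧
      house (algebraMap _ K γ) ≤ B ^ M * houseLength G := by
  have hB : 0 ≤ B := (house_nonneg _).trans hb
  have hdeg {u : σ →₀ ℕ} (hu : u ∈ G.support) : u.degree + (M - u.degree) = M :=
    Nat.add_sub_cancel' ((le_totalDegree hu).trans hG)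
  refine ⟨∑ u ∈ G.support, G.coeff u * ((u.prod fun j e => a j ^ e) * b ^ (M - u.degree)), ?_, ?_⟩
  · rw [aeval_eq_sum_coeff_mul_prod, map_sum, Finset.mul_sum]
    refine Finset.sum_congr rfl fun u hu => ?_
    have hprod : algebraMap (𝓞 K) ℂ (u.prod fun j e => a j ^ e) =
        algebraMap (𝓞 K) ℂ b ^ u.degree * u.prod fun j e => x j ^ e := by
      simp only [Finsupp.prod, map_prod, map_pow, ha, mul_pow, Finset.prod_mul_distrib,
        Finset.prod_pow_eq_pow_sum, Finsupp.degree_apply]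
    rw [map_mul, map_mul, hprod, map_pow]
    conv_rhs => rw [← hdeg hu, pow_add]
    ring
  · rw [map_sum, houseLength, Finset.mul_sum]
    refine (house_sum_le_sum_house _ _).trans (Finset.sum_le_sum fun u hu => ?_)
    have hprod : house (algebraMap (𝓞 K) K (u.prod fun j e => a j ^ e)) ≤ B ^ u.degree := by
      simpa [Finsupp.prod] using house_finsuppProd_pow_le haB u
    have hpow : house (algebraMap (𝓞 K) K (b ^ (M - u.degree))) ≤ B ^ (M - u.degree) := by
      rw [map_pow]
      exact (house_pow_le _ _).trans (pow_le_pow_left₀ (house_nonneg _) hb _)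
    have := house_nonneg (algebraMap _ K (G.coeff u))
    have := house_nonneg (algebraMap (𝓞 K) K (b ^ (M - u.degree)))
    rw [map_mul, map_mul]
    calc house (algebraMap _ K (G.coeff u) * (_ * _))
        ≤ house (algebraMap _ K (G.coeff u)) * (B ^ u.degree * B ^ (M - u.degree)) := by
          refine (house_mul_le _ _).trans ?_
          gcongr
          exact (house_mul_le _ _).trans (by gcongr)
      _ = B ^ M * house (algebraMap _ K (G.coeff u)) := by rw [← pow_add, hdeg hu, mul_comm]

theorem exists_common_denominator {α : Type*} [Finite α] [Finite σ] (x : α → σ → ℂ)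
    (hx : ∀ s j, x s j ∈ Set.range (algebraMap K ℂ)) :
    ∃ (b : 𝓞 K) (a : α → σ → 𝓞 K), b ≠ 0 ∧
      ∀ s j, algebraMap (𝓞 K) ℂ (a s j) = algebraMap (𝓞 K) ℂ b * x s j := by
  choose y hy using hx
  obtain ⟨b, hb⟩ := IsLocalization.exist_integer_multiples_of_finite (nonZeroDivisors (𝓞 K))
    fun q : α × σ => y q.1 q.2
  choose a ha using hb
  refine ⟨b, fun s j => a (s, j), nonZeroDivisors.coe_ne_zero b, fun s j => ?_⟩
  rw [← hy, IsScalarTower.algebraMap_apply (𝓞 K) K ℂ, ha, IsScalarTower.algebraMap_apply (𝓞 K) K ℂ,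
    ← map_mul, Algebra.smul_def]

end PolynomialValues

/-! ### Polynomials in solutions of polynomial differential equations -/

section PolynomialODE

open MvPolynomial
open scoped ContDiff

variable {E R σ : Type*} [NormedAddCommGroup E] [NormedSpace ℂ E] [CommSemiring R] [Algebra R ℂ]

namespace entireFunctions

theorem aeval_apply (g : σ → entireFunctions E) (G : MvPolynomial σ R) (t : E) :
    (aeval g G : entireFunctions E) t = aeval (fun j => g j t) G :=
  comp_aeval_apply g ((evalAt t).restrictScalars R) G

theorem dirDeriv_aeval {v : E} {g : σ → entireFunctions E} {p : σ → MvPolynomial σ R}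
    (hg : ∀ j, dirDeriv v (g j) = aeval g (p j)) (G : MvPolynomial σ R) :
    dirDeriv v (aeval g G) = aeval g (mkDerivation R p G) := by
  induction G using MvPolynomial.induction_on with
  | C a => simp [← algebraMap_eq, IsScalarTower.algebraMap_apply R ℂ (entireFunctions E)]
  | add G H hG hH => rw [map_add, map_add, map_add, map_add, hG, hH]
  | mul_X G j hG =>
    simp [Derivation.leibniz, hG, hg]

theorem iterDerivation_dirDeriv_aeval {ι : Type*} {v : ι → E} {g : σ → entireFunctions E}
    {p : ι → σ → MvPolynomial σ R} (hg : ∀ ν j, dirDeriv (v ν) (g j) = aeval g (p ν j))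
    (w : List ι) (G : MvPolynomial σ R) :
    iterDerivation (fun ν => dirDeriv (v ν)) w (aeval g G) =
      aeval g (iterDerivation (fun ν => mkDerivation R (p ν)) w G) :=
  (map_iterDerivation (fun ν H => (dirDeriv_aeval (hg ν) H).symm) w G).symm

theorem iterDerivation_dirDeriv_aeval_apply {ι : Type*} {v : ι → E} {g : σ → entireFunctions E}
    {p : ι → σ → MvPolynomial σ R} (hg : ∀ ν j, dirDeriv (v ν) (g j) = aeval g (p ν j))
    (w : List ι) (G : MvPolynomial σ R) (t : E) :
    iterDerivation (fun ν => dirDeriv (v ν)) w (aeval g G) t =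
      aeval (fun j => g j t) (iterDerivation (fun ν => mkDerivation R (p ν)) w G) := by
  rw [iterDerivation_dirDeriv_aeval hg, aeval_apply]

theorem contDiff_of_fderiv_eq_aeval [FiniteDimensional ℂ E] {ι : Type*} [Finite ι]
    (v : Module.Basis ι ℂ E) {g : σ → E → ℂ} (hg : ∀ j, Differentiable ℂ (g j))
    {p : ι → σ → MvPolynomial σ R}
    (hp : ∀ ν j t, fderiv ℂ (g j) t (v ν) = aeval (fun i => g i t) (p ν j)) (j : σ) :
    ContDiff ℂ ∞ (g j) := by
  have := Fintype.ofFinite ι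
  rw [contDiff_infty]
  intro k
  induction k generalizing j with
  | zero => exact contDiff_zero.2 (hg j).continuous
  | succ k ih =>
    push_cast
    rw [contDiff_succ_iff_fderiv_apply]
    refine ⟨hg j, by simp, fun y => ?_⟩
    have hderiv : (fun t => fderiv ℂ (g j) t y) =
        fun t => ∑ ν, v.repr y ν * aeval (fun i => g i t) (p ν j) := by
      funext t
      conv_lhs => rw [← v.sum_repr y]
      simp only [map_sum, map_smul, hp, smul_eq_mul]
    rw [hderiv]
    refine ContDiff.sum fun ν _ => contDiff_const.mul ?_
    simp only [aeval_eq_sum_coeff_mul_prod]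
    exact ContDiff.sum fun u _ => contDiff_const.mul (contDiff_prod fun i _ => (ih i).pow _)

end entireFunctions

end PolynomialODE

/-! ### Arithmetic of the derivatives at points with algebraic values -/

section ArithmeticValues

open NumberField MvPolynomial

variable {K σ ι E : Type*} [Field K] [NumberField K] [Algebra K ℂ] [NormedAddCommGroup E]
  [NormedSpace ℂ E]

namespace entireFunctions

theorem exists_algebraMap_eq_pow_mul_iterDerivation [Finite ι] [Finite σ] {v : ι → E}
    {g : σ → entireFunctions E} {p : ι → σ → MvPolynomial σ (𝓞 K)}
    (hg : ∀ ν j, dirDeriv (v ν) (g j) = aeval g (p ν j)) {κ : Type*} [Finite κ] {x : κ → E}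
    (hx : ∀ s j, g j (x s) ∈ Set.range (algebraMap K ℂ)) :
    ∃ (b : 𝓞 K) (C : ℝ), b ≠ 0 ∧ 1 ≤ C ∧
      ∀ (s : κ) (w : List ι) (G : MvPolynomial σ (𝓞 K)) (M : ℕ), G.totalDegree ≤ M →
        w.length ≤ M → ∃ γ : 𝓞 K,
          algebraMap (𝓞 K) ℂ γ = algebraMap (𝓞 K) ℂ b ^ M *
            iterDerivation (fun ν => dirDeriv (v ν)) w (aeval g G) (x s) ∧
          house (algebraMap _ K γ) ≤ C ^ M * ((C * M) ^ w.length * houseLength G) := by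
  obtain ⟨b, a, hb, ha⟩ := exists_common_denominator (fun s j => g j (x s)) hx
  obtain ⟨δ, hδ⟩ := Finite.exists_le fun q : ι × σ => (p q.1 q.2).totalDegree
  obtain ⟨B₁, hB₁⟩ := Finite.exists_le fun q : ι × σ => houseLength (p q.1 q.2)
  obtain ⟨B₂, hB₂⟩ := Finite.exists_le fun q : κ × σ => house (algebraMap _ K (a q.1 q.2))
  replace hδ (ν : ι) (j : σ) : (p ν j).totalDegree ≤ δ := hδ (ν, j)
  obtain ⟨B, hB1, hBb, hBa, hBp⟩ : ∃ B, 1 ≤ B ∧ house (algebraMap _ K b) ≤ B ∧ B₂ ≤ B ∧ B₁ ≤ B :=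
    ⟨max 1 (max (house (algebraMap _ K b)) (max B₂ B₁)), by simp⟩
  have hB0 : 0 ≤ B := zero_le_one.trans hB1
  have hδ1 : (1 : ℝ) ≤ 1 + δ := by simp
  refine ⟨b ^ (1 + δ), B ^ (1 + δ) * (1 + δ), pow_ne_zero _ hb,
    one_le_mul_of_one_le_of_one_le (one_le_pow₀ hB1) hδ1, fun s w G M hG hw => ?_⟩
  have hN : G.totalDegree + w.length * δ ≤ (1 + δ) * M := by
    rw [add_mul, one_mul, mul_comm δ]
    gcongr
  obtain ⟨γ, hγ, hγB⟩ := exists_algebraMap_eq_pow_mul_aeval (ha s) hBb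
    (fun j => (hB₂ (s, j)).trans hBa)
    ((totalDegree_iterDerivation_mkDerivation_le hδ w G).trans hN)
  refine ⟨γ, ?_, ?_⟩
  · rw [hγ, map_pow, ← pow_mul]
    exact congrArg _ (iterDerivation_dirDeriv_aeval_apply hg w G (x s)).symm
  · have hlength := houseLength_iterDerivation_mkDerivation_le hδ hB0
      (fun ν j => (hB₁ (ν, j)).trans hBp) w G hN
    have hG0 := houseLength_nonneg G
    calc house (algebraMap _ K γ)
        ≤ B ^ ((1 + δ) * M) * ((B * ((1 + δ) * M : ℕ)) ^ w.length * houseLength G) := by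
          exact hγB.trans (by gcongr)
      _ ≤ (B ^ (1 + δ) * (1 + δ)) ^ M *
          ((B ^ (1 + δ) * (1 + δ) * M) ^ w.length * houseLength G) := by
        rw [pow_mul, Nat.cast_mul, Nat.cast_add, Nat.cast_one, ← mul_assoc B]
        gcongr
        · exact le_mul_of_one_le_right (by positivity) hδ1
        · exact le_self_pow₀ hB1 (by lia)

theorem exists_one_le_norm_iterDerivation_mul [Finite ι] [Finite σ] {v : ι → E}
    {g : σ → entireFunctions E} {p : ι → σ → MvPolynomial σ (𝓞 K)}
    (hg : ∀ ν j, dirDeriv (v ν) (g j) = aeval g (p ν j)) {κ : Type*} [Finite κ] {x : κ → E}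
    (hx : ∀ s j, g j (x s) ∈ Set.range (algebraMap K ℂ)) :
    ∃ C : ℝ, 1 ≤ C ∧ ∀ (s : κ) (w : List ι) (G : MvPolynomial σ (𝓞 K)) (M : ℕ),
      G.totalDegree ≤ M → w.length ≤ M →
      iterDerivation (fun ν => dirDeriv (v ν)) w (aeval g G) (x s) ≠ 0 →
      1 ≤ ‖iterDerivation (fun ν => dirDeriv (v ν)) w (aeval g G) (x s)‖ * (C ^ M *
        (C ^ M * ((C * M) ^ w.length * houseLength G)) ^ (Module.finrank ℚ K - 1)) := by
  obtain ⟨b, C, hb, hC, hval⟩ := exists_algebraMap_eq_pow_mul_iterDerivation hg hx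
  refine ⟨max C ‖algebraMap (𝓞 K) ℂ b‖, hC.trans (le_max_left _ _),
    fun s w G M hG hw hne => ?_⟩
  obtain ⟨γ, hγ, hγC⟩ := hval s w G M hG hw
  have hγ0 : γ ≠ 0 := by
    rintro rfl
    rw [map_zero] at hγ
    have hb' : algebraMap (𝓞 K) ℂ b ≠ 0 :=
      (map_ne_zero_iff _ (FaithfulSMul.algebraMap_injective (𝓞 K) ℂ)).2 hb
    exact mul_ne_zero (pow_ne_zero _ hb') hne hγ.symm
  have hliouville := one_le_norm_algebraMap_mul_house_pow hγ0
  rw [hγ, norm_mul, norm_pow, mul_comm (_ ^ M), mul_assoc] at hliouville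
  have := houseLength_nonneg G
  have := house_nonneg (algebraMap _ K γ)
  refine hliouville.trans ?_
  gcongr
  · exact le_max_right _ _
  · refine hγC.trans ?_
    gcongr <;> exact le_max_left _ _

end entireFunctions

end ArithmeticValues

/-! ### The auxiliary polynomial -/

section AuxiliaryPolynomial

open NumberField MvPolynomial

theorem finsuppDegree_le_card_mul {σ : Type*} [Fintype σ] {u : σ →₀ ℕ} {L : ℕ}
    (hu : ∀ j, u j ≤ L) : u.degree ≤ Fintype.card σ * L := by
  rw [Finsupp.degree_eq_sum, ← smul_eq_mul]
  exact Finset.sum_le_card_nsmul _ _ _ fun j _ => hu j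

theorem exists_ne_zero_forall_linearMap_eq_zero.{u, v, w} (K : Type u) (σ : Type v) [Field K]
    [NumberField K] [Algebra K ℂ] [Fintype σ] :
    ∃ C : ℝ, 1 ≤ C ∧ ∀ {α : Type w} [Fintype α] (ℓ : α → MvPolynomial σ (𝓞 K) →ₗ[𝓞 K] ℂ)
      (L : ℕ) {A : ℝ}, 1 ≤ A → 0 < L → 2 * Fintype.card α ≤ L ^ Fintype.card σ →
      (∀ q (u : σ →₀ ℕ), (∀ j, u j < L) → ∃ γ : 𝓞 K,
        algebraMap (𝓞 K) ℂ γ = ℓ q (monomial u 1) ∧ house (algebraMap _ K γ) ≤ A) →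
      ∃ G : MvPolynomial σ (𝓞 K), G ≠ 0 ∧ G.totalDegree ≤ Fintype.card σ * L ∧
        houseLength G ≤ L ^ Fintype.card σ * (C * (C * (L ^ Fintype.card σ * A))) ∧
        ∀ q, ℓ q G = 0 := by
  classical
  obtain ⟨C, hC, hsiegel⟩ := exists_siegel_constant K
  refine ⟨C, hC, fun {α} _ ℓ L {A} hA hL hcard hℓ => ?_⟩
  let u (e : σ → Fin L) : σ →₀ ℕ := Finsupp.equivFunOnFinite.symm fun j => e j
  have hu : Function.Injective u := fun e e' h => funext fun j => Fin.ext (DFunLike.congr_fun h j)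
  have hβ : Fintype.card (σ → Fin L) = L ^ Fintype.card σ := by simp
  choose a ha haA using fun q e => hℓ q (u e) fun j => (e j).2
  have : NeZero L := ⟨hL.ne'⟩
  obtain ⟨ξ, hξ0, hξ, hξC⟩ := hsiegel (Matrix.of a) hA ⟨0⟩ (hcard.trans_eq hβ.symm) haA
  rw [hβ, Nat.cast_pow] at hξC
  refine ⟨∑ e, monomial (u e) (ξ e), fun h => hξ0 (funext fun e => ?_), ?_, ?_, fun q => ?_⟩
  · simpa [coeff_sum, coeff_monomial, hu.eq_iff] using congrArg (coeff (u e)) h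
  · exact totalDegree_finsetSum_le fun e _ => (totalDegree_monomial_le _ _).trans
      (finsuppDegree_le_card_mul fun j => (e j).2.le)
  · refine (houseLength_sum_le _ _).trans ?_
    simp only [houseLength_monomial]
    refine (Finset.sum_le_card_nsmul _ _ _ fun e _ => hξC e).trans_eq ?_
    rw [Finset.card_univ, hβ, nsmul_eq_mul, Nat.cast_pow]
  · have hmonomial (e : σ → Fin L) :
        ℓ q (monomial (u e) (ξ e)) = algebraMap (𝓞 K) ℂ (a q e * ξ e) := by
      rw [mul_comm, map_mul, ha, ← Algebra.smul_def, ← map_smul, smul_monomial, smul_eq_mul,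
        mul_one]
    rw [map_sum, Finset.sum_congr rfl fun e _ => hmonomial e, ← map_sum]
    exact (congrArg (algebraMap (𝓞 K) ℂ) (congrFun hξ q)).trans (map_zero _)

theorem exists_representatives_perm {ι : Type*} [Fintype ι] (T : ℕ) :
    ∃ W : (ι → Fin T) → List ι, (∀ k, (W k).length ≤ Fintype.card ι * T) ∧
      ∀ w : List ι, w.length < T → ∃ k, w.Perm (W k) := by
  classical
  let m (k : ι → Fin T) : ι →₀ ℕ := Finsupp.equivFunOnFinite.symm fun ν => k ν
  refine ⟨fun k => (Finsupp.toMultiset (m k)).toList, fun k => ?_, fun w hw => ?_⟩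
  · rw [Multiset.length_toList, Finsupp.card_toMultiset]
    exact finsuppDegree_le_card_mul fun ν => (k ν).2.le
  · refine ⟨fun ν => ⟨w.count ν, List.count_le_length.trans_lt hw⟩, ?_⟩
    rw [← Multiset.coe_eq_coe, Multiset.coe_toList]
    ext ν
    simp [m]

theorem siegel_bound_le_pow {c C : ℝ} (hc : 1 ≤ c) (hC : 0 ≤ C) {d n L T : ℕ} (hL : 0 < L)
    (hLT : L ≤ T) :
    (L : ℝ) ^ d * (c * (c * (L ^ d * (C ^ ((d + n) * T) * (C * ((d + n) * T : ℕ)) ^ (n * T))))) ≤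
      (4 ^ d * c ^ 2 * C ^ (d + n) * (C * (d + n)) ^ n * (T : ℝ) ^ n) ^ T := by
  have hL2 : (L : ℝ) ≤ 2 ^ T := by exact_mod_cast hLT.trans Nat.lt_two_pow_self.le
  have hLd : (L : ℝ) ^ d * L ^ d ≤ (4 ^ d) ^ T := by
    rw [← mul_pow, pow_right_comm]
    gcongr
    calc (L : ℝ) * L ≤ 2 ^ T * 2 ^ T := by gcongr
      _ = 4 ^ T := by rw [← mul_pow]; norm_num
  have hc2 : c ^ 2 ≤ (c ^ 2) ^ T := le_self_pow₀ (one_le_pow₀ hc) (by lia)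
  calc (L : ℝ) ^ d * (c * (c * (L ^ d * (C ^ ((d + n) * T) * (C * ((d + n) * T : ℕ)) ^ (n * T)))))
      = (L : ℝ) ^ d * L ^ d * c ^ 2 * (C ^ ((d + n) * T) * (C * (d + n) * T) ^ (n * T)) := by
        push_cast
        ring
    _ ≤ (4 ^ d) ^ T * (c ^ 2) ^ T * (C ^ ((d + n) * T) * (C * (d + n) * T) ^ (n * T)) := by gcongr
    _ = _ := by simp only [mul_pow, ← pow_mul, mul_assoc]

namespace entireFunctions

variable {K σ ι E : Type*} [Field K] [NumberField K] [Algebra K ℂ] [NormedAddCommGroup E]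
  [NormedSpace ℂ E] [Fintype ι] [Fintype σ] [Nonempty σ]

theorem exists_polynomial_iterDerivation_eq_zero {v : ι → E}
    {g : σ → entireFunctions E} {p : ι → σ → MvPolynomial σ (𝓞 K)}
    (hg : ∀ ν j, dirDeriv (v ν) (g j) = aeval g (p ν j)) {κ : Type*} [Fintype κ] {x : κ → E}
    (hx : ∀ s j, g j (x s) ∈ Set.range (algebraMap K ℂ)) {d n : ℕ} (hdσ : Fintype.card σ = d)
    (hnι : Fintype.card ι = n) :
    ∃ c C : ℝ, 1 ≤ c ∧ 1 ≤ C ∧ ∀ T L : ℕ, 0 < L → L ≤ T →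
      2 * (Fintype.card κ * T ^ n) ≤ L ^ d →
      ∃ G : MvPolynomial σ (𝓞 K), G ≠ 0 ∧ G.totalDegree ≤ d * L ∧
        houseLength G ≤ L ^ d * (c * (c * (L ^ d *
          (C ^ ((d + n) * T) * (C * ((d + n) * T : ℕ)) ^ (n * T))))) ∧
        ∀ s, ∀ w : List ι, w.length < T →
          iterDerivation (fun ν => dirDeriv (v ν)) w (aeval g G) (x s) = 0 := by
  classical
  obtain ⟨b, C, hb, hC, hval⟩ := exists_algebraMap_eq_pow_mul_iterDerivation hg hx
  obtain ⟨c, hc, hsiegel⟩ := exists_ne_zero_forall_linearMap_eq_zero K σ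
  rw [hdσ] at hsiegel
  have hd : 0 < d := hdσ ▸ Fintype.card_pos
  refine ⟨c, C, hc, hC, fun T L hL hLT hcard => ?_⟩
  obtain ⟨W, hW, hperm⟩ := exists_representatives_perm (ι := ι) T
  rw [hnι] at hW
  set M := (d + n) * T
  have hCM : 1 ≤ C * (M : ℝ) := one_le_mul_of_one_le_of_one_le hC
    (Nat.one_le_cast.2 (Nat.mul_pos (by lia) (hL.trans_le hLT)))
  let ℓ (q : κ × (ι → Fin T)) : MvPolynomial σ (𝓞 K) →ₗ[𝓞 K] ℂ :=
    b ^ M • ((aeval fun j => g j (x q.1)).toLinearMap ∘ₗ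
      iterDerivation (fun ν => mkDerivation (𝓞 K) (p ν)) (W q.2))
  have hℓ (q : κ × (ι → Fin T)) (G : MvPolynomial σ (𝓞 K)) : ℓ q G = algebraMap (𝓞 K) ℂ b ^ M *
      iterDerivation (fun ν => dirDeriv (v ν)) (W q.2) (aeval g G) (x q.1) := by
    refine (Algebra.smul_def (b ^ M) _).trans ?_
    rw [map_pow]
    exact congrArg _ (iterDerivation_dirDeriv_aeval_apply hg _ G _).symm
  obtain ⟨G, hG0, hdeg, hlength, hG⟩ := hsiegel ℓ L (A := C ^ M * (C * M) ^ (n * T))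
    (one_le_mul_of_one_le_of_one_le (one_le_pow₀ hC) (one_le_pow₀ hCM)) hL
    (by simpa [hnι] using hcard) fun q u hu => by
      have hu' : (monomial u (1 : 𝓞 K)).totalDegree ≤ d * L := hdσ ▸
        (totalDegree_monomial_le _ _).trans (finsuppDegree_le_card_mul fun j => (hu j).le)
      obtain ⟨γ, hγ, hγC⟩ := hval q.1 (W q.2) (monomial u 1) M
        (hu'.trans (Nat.mul_le_mul (by lia) hLT)) ((hW q.2).trans (Nat.mul_le_mul_right T (by lia)))
      refine ⟨γ, hγ.trans (hℓ q _).symm, hγC.trans ?_⟩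
      rw [houseLength_monomial, map_one, house_one, mul_one]
      gcongr
      exact hW q.2
  refine ⟨G, hG0, hdeg, hlength, fun s w hw => ?_⟩
  obtain ⟨k, hk⟩ := hperm w hw
  rw [iterDerivation_perm (fun i j => dirDeriv_comm _ _) hk]
  have hb' : algebraMap (𝓞 K) ℂ b ≠ 0 :=
    (map_ne_zero_iff _ (FaithfulSMul.algebraMap_injective (𝓞 K) ℂ)).2 hb
  exact (mul_eq_zero.1 ((hℓ (s, k) G).symm.trans (hG (s, k)))).resolve_left (pow_ne_zero M hb')

theorem exists_auxiliary_polynomial {v : ι → E}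
    {g : σ → entireFunctions E} {p : ι → σ → MvPolynomial σ (𝓞 K)}
    (hg : ∀ ν j, dirDeriv (v ν) (g j) = aeval g (p ν j)) {κ : Type*} [Fintype κ] {x : κ → E}
    (hx : ∀ s j, g j (x s) ∈ Set.range (algebraMap K ℂ)) :
    ∃ C : ℝ, 1 ≤ C ∧ ∀ T L : ℕ, 0 < L → L ≤ T →
      2 * (Fintype.card κ * T ^ Fintype.card ι) ≤ L ^ Fintype.card σ →
      ∃ G : MvPolynomial σ (𝓞 K), G ≠ 0 ∧ G.totalDegree ≤ Fintype.card σ * L ∧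
        houseLength G ≤ (C * (T : ℝ) ^ Fintype.card ι) ^ T ∧
        ∀ s, ∀ w : List ι, w.length < T →
          iterDerivation (fun ν => dirDeriv (v ν)) w (aeval g G) (x s) = 0 := by
  obtain ⟨c, C, hc, hC, hG⟩ := exists_polynomial_iterDerivation_eq_zero hg hx rfl rfl
  set d := Fintype.card σ
  set n := Fintype.card ι
  have hC' : 1 ≤ 4 ^ d * c ^ 2 * C ^ (d + n) * (C * (d + n)) ^ n := by
    have h4 : (1 : ℝ) ≤ 4 ^ d := one_le_pow₀ (by norm_num)
    have hdn : (1 : ℝ) ≤ d + n := by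
      exact_mod_cast (Fintype.card_pos (α := σ)).trans_le (Nat.le_add_right d n)
    have hCdn : 1 ≤ C * (d + n) := one_le_mul_of_one_le_of_one_le hC hdn
    exact one_le_mul_of_one_le_of_one_le (one_le_mul_of_one_le_of_one_le
      (one_le_mul_of_one_le_of_one_le h4 (one_le_pow₀ hc)) (one_le_pow₀ hC)) (one_le_pow₀ hCdn)
  refine ⟨_, hC', fun T L hL hLT hcard => ?_⟩
  obtain ⟨G, hG0, hdeg, hlength, hvanish⟩ := hG T L hL hLT hcard
  have hlength' := hlength.trans (siegel_bound_le_pow hc (zero_le_one.trans hC) hL hLT)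
  exact ⟨G, hG0, hdeg, hlength', hvanish⟩

end entireFunctions

end AuxiliaryPolynomial

/-! ### The first nonvanishing derivative -/

section UpperBound

namespace entireFunctions

theorem norm_iterDerivation_le_of_vanishesToOrder_of_coord_mem {ι : Type*} [Fintype ι]
    {Z : Finset ℂ} {F : entireFunctions (ι → ℂ)} {l : List (ι → ℂ)} {V r R M : ℝ} {e : ℕ}
    (hV : 0 < V) (hl : ∀ v ∈ l, ‖v‖ ≤ V) (hZ : ∀ a ∈ Z, ‖a‖ ≤ r) (hR : 5 * (r + 1) ≤ R)
    (he : 2 * (Fintype.card ι + 1) * e ≤ Z.card) (hlength : 2 * (Fintype.card ι + 1) ≤ l.length)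
    (hM : ∀ t, ‖t‖ ≤ R → ‖F t‖ ≤ M)
    (hF : ∀ t, (∀ i, t i ∈ Z) → VanishesToOrder F t l.length) {t : ι → ℂ} (ht : ‖t‖ ≤ r) :
    ‖iterDerivation dirDeriv l F t‖ ≤ (V * l.length) ^ l.length *
      (3 ^ Fintype.card ι * ((5 * (r + 1) / R) ^ (e * l.length) * M)) := by
  classical
  set k := Fintype.card ι + 1
  set T := (l.length - 1) / k
  have hlength0 : (0 : ℝ) < l.length := Nat.cast_pos.2 (by lia)
  have hr : 0 ≤ r := (norm_nonneg t).trans ht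
  have hM0 : 0 ≤ M := (norm_nonneg _).trans (hM 0 (by simp; linarith))
  have hTlength : Fintype.card ι * T + 1 ≤ l.length := by
    have := Nat.mul_div_le (l.length - 1) k
    lia
  have hlengthT : l.length ≤ 2 * k * T := by
    have := Nat.lt_mul_div_succ (l.length - 1) (show 0 < k by lia)
    lia
  have heT : e * l.length ≤ T * Z.card := by
    calc e * l.length ≤ e * (2 * k * T) := by gcongr
      _ = T * (2 * k * e) := by ring
      _ ≤ T * Z.card := by gcongr
  have hratio : 4 * (r + 1) / (R - (r + 1)) ≤ 5 * (r + 1) / R := by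
    rw [div_le_div_iff₀ (by linarith) (by linarith)]
    nlinarith
  have hratio1 : 5 * (r + 1) / R ≤ 1 := div_le_one_of_le₀ hR (by linarith)
  have hschwarz (z : ι → ℂ) (hz : ‖z - t‖ ≤ l.length * (1 / l.length : ℝ)) :
      ‖F z‖ ≤ 3 ^ Fintype.card ι * ((5 * (r + 1) / R) ^ (e * l.length) * M) := by
    have hz' : ‖z‖ ≤ r + 1 := by
      rw [mul_one_div_cancel hlength0.ne'] at hz
      linarith [norm_le_norm_sub_add z t]
    refine (norm_le_of_vanishesToOrder_of_coord_mem (T := T) (fun a ha => (hZ a ha).trans (by simp))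
      (by linarith) (hratio.trans hratio1) hz' Finset.univ hM fun s hs =>
        (hF s fun i => hs i (Finset.mem_univ i)).mono hTlength).trans ?_
    rw [Finset.card_univ]
    have : 0 ≤ 4 * (r + 1) / (R - (r + 1)) := div_nonneg (by linarith) (by linarith)
    gcongr 3 ^ _ * (?_ * M)
    exact (pow_le_pow_of_le_one this (hratio.trans hratio1) heT).trans (by gcongr)
  simpa using norm_iterDerivation_dirDeriv_le hV hl (one_div_pos.2 hlength0) hschwarz

end entireFunctions

end UpperBound

section AuxiliaryFunction

open NumberField MvPolynomial

namespace entireFunctions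

variable {K σ ι E : Type*} [Field K] [NumberField K] [Algebra K ℂ] [NormedAddCommGroup E]
  [NormedSpace ℂ E] [Fintype ι] [Fintype σ]

theorem exists_first_nonvanishing_iterDerivation (hcard : Fintype.card ι < Fintype.card σ)
    {v : ι → E} (hv : Submodule.span ℂ (Set.range v) = ⊤) {g : σ → entireFunctions E}
    {p : ι → σ → MvPolynomial σ (𝓞 K)} (hg : ∀ ν j, dirDeriv (v ν) (g j) = aeval g (p ν j))
    (hinj : Function.Injective (aeval (R := 𝓞 K) g)) {κ : Type*} [Fintype κ] [Nonempty κ]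
    {x : κ → E} (hx : ∀ s j, g j (x s) ∈ Set.range (algebraMap K ℂ)) {S : ℕ}
    (hS : Fintype.card κ ≤ S ^ Fintype.card ι) (hS0 : 0 < S) :
    ∃ C : ℝ, 1 ≤ C ∧ ∀ N : ℕ, 2 * S ≤ N →
      ∃ (G : MvPolynomial σ (𝓞 K)) (s : κ) (w : List ι), N ^ (Fintype.card ι + 1) ≤ w.length ∧
        G.totalDegree ≤ Fintype.card σ * (2 * S * N ^ Fintype.card ι) ∧
        houseLength G ≤ (C * (w.length : ℝ) ^ Fintype.card ι) ^ w.length ∧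
        iterDerivation (fun ν => dirDeriv (v ν)) w (aeval g G) (x s) ≠ 0 ∧
        ∀ s', VanishesToOrder (aeval g G) (x s') w.length := by
  have : Nonempty σ := Fintype.card_pos_iff.1 (by lia)
  obtain ⟨C, hC, hG⟩ := exists_auxiliary_polynomial hg hx
  set n := Fintype.card ι
  refine ⟨C, hC, fun N hN => ?_⟩
  have hN0 : 0 < N := by lia
  have hL0 : 0 < 2 * S * N ^ n := by positivity
  have hLT : 2 * S * N ^ n ≤ N ^ (n + 1) := by rw [pow_succ']; gcongr
  have hcount : 2 * (Fintype.card κ * (N ^ (n + 1)) ^ n) ≤ (2 * S * N ^ n) ^ Fintype.card σ :=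
    calc 2 * (Fintype.card κ * (N ^ (n + 1)) ^ n)
        ≤ 2 * S * 2 ^ n * (S ^ n * (N ^ (n + 1)) ^ n) := by
          gcongr
          nlinarith [Nat.one_le_two_pow (n := n)]
      _ = (2 * S * N ^ n) ^ (n + 1) := by ring
      _ ≤ _ := Nat.pow_le_pow_right hL0 hcard
  obtain ⟨G, hG0, hdeg, hlength, hvanish⟩ := hG _ _ hL0 hLT hcount
  have hF0 : aeval g G ≠ 0 := fun h => hG0 (hinj (h.trans (map_zero _).symm))
  obtain ⟨s, w, hw0, hw⟩ := exists_iterDerivation_ne_zero_of_forall_vanishesToOrder hv x hF0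
  have hTw : N ^ (n + 1) ≤ w.length := not_lt.1 fun hlt => hw0 (hvanish s w hlt)
  refine ⟨G, s, w, hTw, hdeg, hlength.trans ?_, hw0, hw⟩
  have hTw' : ((N ^ (n + 1) : ℕ) : ℝ) ≤ w.length := Nat.cast_le.2 hTw
  have hbase : 1 ≤ C * (w.length : ℝ) ^ n := one_le_mul_of_one_le_of_one_le hC
    (one_le_pow₀ (Nat.one_le_cast.2 ((pow_pos hN0 _).trans_le hTw)))
  calc (C * ((N ^ (n + 1) : ℕ) : ℝ) ^ n) ^ N ^ (n + 1)
      ≤ (C * (w.length : ℝ) ^ n) ^ N ^ (n + 1) := by gcongr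
    _ ≤ _ := pow_le_pow_right₀ hbase hTw

end entireFunctions

end AuxiliaryFunction

/-! ### Comparison of the two estimates -/

section Comparison

theorem pow_mul_pow_le_of_pow_le {N R X : ℝ} {m n : ℕ} (hN : 0 ≤ N) (hR : 0 ≤ R)
    (hNX : N ^ (n + 1) ≤ X) (hRX : R ^ (m * (n + 1)) ≤ X) : N ^ n * R ^ m ≤ X := by
  have hX : 0 ≤ X := (pow_nonneg hN _).trans hNX
  refine le_of_pow_le_pow_left₀ n.succ_ne_zero hX ?_
  calc (N ^ n * R ^ m) ^ (n + 1) = (N ^ (n + 1)) ^ n * R ^ (m * (n + 1)) := by ring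
    _ ≤ X ^ n * X := by gcongr
    _ = X ^ (n + 1) := (pow_succ X n).symm

theorem one_le_of_one_le_mul_pow_house {β H η V B C C₁ : ℝ} {n c D e X : ℕ} (hX : 0 < X)
    (hD : 0 < D) (hη : 0 ≤ η) (hV : 0 ≤ V) (hB : 0 ≤ B) (hC : 0 ≤ C) (hC₁ : 0 ≤ C₁) (hH0 : 0 ≤ H)
    (hH : H ≤ (C₁ * (X : ℝ) ^ n) ^ X)
    (hβ : β ≤ (V * X) ^ X * (3 ^ n * (η ^ (e * X) * (H * B ^ X))))
    (h : 1 ≤ β * (C ^ (c * X) * (C ^ (c * X) * ((C * (c * X : ℕ)) ^ X * H)) ^ (D - 1))) :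
    1 ≤ V * 3 ^ n * B * C₁ * C ^ c * (C ^ c * (C * c) * C₁) ^ (D - 1) *
      (X : ℝ) ^ ((n + 1) * D) * η ^ e := by
  have h3 : (3 : ℝ) ^ n ≤ (3 ^ n) ^ X := le_self_pow₀ (one_le_pow₀ (by norm_num)) hX.ne'
  refine (one_le_pow_iff_of_nonneg (by positivity) hX.ne').1 (h.trans ?_)
  obtain ⟨D, rfl⟩ := Nat.exists_eq_add_one_of_ne_zero hD.ne'
  calc β * (C ^ (c * X) * (C ^ (c * X) * ((C * (c * X : ℕ)) ^ X * H)) ^ D)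
      ≤ ((V * X) ^ X * ((3 ^ n) ^ X * (η ^ (e * X) * ((C₁ * X ^ n) ^ X * B ^ X)))) *
        (C ^ (c * X) * (C ^ (c * X) * ((C * (c * X : ℕ)) ^ X * (C₁ * X ^ n) ^ X)) ^ D) := by
        gcongr
        exact hβ.trans (by gcongr)
    _ = ((V * X) * 3 ^ n * η ^ e * (C₁ * X ^ n) * B * C ^ c *
        (C ^ c * (C * (c * X)) * (C₁ * X ^ n)) ^ D) ^ X := by
        push_cast
        ring
    _ = _ := by
        congr 1
        rw [Nat.add_sub_cancel]
        ring

theorem le_mul_pow_of_one_le_mul_div_pow {Q P R q : ℝ} {e : ℕ} (hR : 0 < R) (hP : P = R ^ e)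
    (h : 1 ≤ Q * P * (q / R) ^ (e + 1)) : R ≤ Q * q ^ (e + 1) := by
  rw [hP, div_pow, pow_succ R, ← mul_div_assoc, one_le_div (by positivity)] at h
  refine le_of_mul_le_mul_left (h.trans_eq ?_) (pow_pos hR e)
  ring

end Comparison

/-! ### The criterion for normalised data -/

section Normalised

open NumberField MvPolynomial

namespace entireFunctions

variable {K σ ι : Type*} [Field K] [NumberField K] [Algebra K ℂ] [Fintype ι]

theorem norm_aeval_le_of_norm_le_exp {E : Type*} [NormedAddCommGroup E] [NormedSpace ℂ E]
    {g : σ → entireFunctions E} {t : E} {A R : ℝ} {d m n N S X : ℕ} (hA : 0 ≤ A) (hR : 0 ≤ R)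
    (ht : ∀ j, ‖g j t‖ ≤ Real.exp (A * R ^ m)) {G : MvPolynomial σ (𝓞 K)}
    (hG : G.totalDegree ≤ d * (2 * S * N ^ n)) (hN : N ^ (n + 1) ≤ X)
    (hRX : R ^ (m * (n + 1)) ≤ X) :
    ‖(aeval g G : entireFunctions E) t‖ ≤ houseLength G * Real.exp (2 * d * S * A) ^ X := by
  have hNR : (N : ℝ) ^ n * R ^ m ≤ X :=
    pow_mul_pow_le_of_pow_le N.cast_nonneg hR (by exact_mod_cast hN) hRX
  refine (congrArg norm (aeval_apply g G t)).trans_le ?_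
  refine (norm_aeval_le (Real.one_le_exp (by positivity)) ht hG).trans ?_
  have := houseLength_nonneg G
  rw [← Real.exp_nat_mul, ← Real.exp_nat_mul]
  refine mul_le_mul_of_nonneg_left (Real.exp_le_exp.2 ?_) this
  calc ((d * (2 * S * N ^ n) : ℕ) : ℝ) * (A * R ^ m) = 2 * d * S * A * (N ^ n * R ^ m) := by
        push_cast
        ring
    _ ≤ 2 * d * S * A * X := by gcongr
    _ = X * (2 * d * S * A) := mul_comm _ _

theorem exists_length_le_of_one_le_norm_iterDerivation_mul {g : σ → entireFunctions (ι → ℂ)}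
    {A V r C C₁ : ℝ} {c d D m : ℕ} (hm : 0 < m) (hD : 0 < D) (hA : 0 ≤ A) (hC : 0 ≤ C)
    (hC₁ : 0 ≤ C₁)
    (hgrow : ∀ j t (R : ℝ), 1 ≤ R → ‖t‖ ≤ R → ‖g j t‖ ≤ Real.exp (A * R ^ m))
    {v : ι → ι → ℂ} (hV : 0 < V) (hv : ∀ ν, ‖v ν‖ ≤ V) {Z : Finset ℂ} (hZ : ∀ a ∈ Z, ‖a‖ ≤ r)
    (hcard : 2 * (Fintype.card ι + 1) * (m * (Fintype.card ι + 1) ^ 2 * D + 1) ≤ Z.card) :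
    ∃ B : ℝ, ∀ (w : List ι) (N : ℕ) (G : MvPolynomial σ (𝓞 K)) (t : ι → ℂ),
      2 * (Fintype.card ι + 1) ≤ w.length →
      (5 * (r + 1)) ^ (m * (Fintype.card ι + 1)) ≤ w.length →
      N ^ (Fintype.card ι + 1) ≤ w.length →
      G.totalDegree ≤ d * (2 * Z.card * N ^ Fintype.card ι) →
      houseLength G ≤ (C₁ * (w.length : ℝ) ^ Fintype.card ι) ^ w.length →
      (∀ t : ι → ℂ, (∀ i, t i ∈ Z) → VanishesToOrder (aeval g G) t w.length) → ‖t‖ ≤ r →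
      1 ≤ ‖iterDerivation (fun ν => dirDeriv (v ν)) w (aeval g G) t‖ *
        (C ^ (c * w.length) * (C ^ (c * w.length) *
          ((C * (c * w.length : ℕ)) ^ w.length * houseLength G)) ^ (D - 1)) →
      w.length ≤ B := by
  refine ⟨(V * 3 ^ Fintype.card ι * Real.exp (2 * d * Z.card * A) * C₁ * C ^ c *
    (C ^ c * (C * c) * C₁) ^ (D - 1) * (5 * (r + 1)) ^ (m * (Fintype.card ι + 1) ^ 2 * D + 1)) ^
      (m * (Fintype.card ι + 1)), fun w N G t hw hr hN hdeg hG hF ht h => ?_⟩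
  set n := Fintype.card ι
  set X := w.length
  have hr0 : 0 ≤ r := (norm_nonneg t).trans ht
  have hmn : m * (n + 1) ≠ 0 := by positivity
  obtain ⟨R, hR0, hRX⟩ : ∃ R : ℝ, 0 ≤ R ∧ R ^ (m * (n + 1)) = X :=
    ⟨(X : ℝ) ^ ((m * (n + 1) : ℕ) : ℝ)⁻¹, by positivity,
      Real.rpow_inv_natCast_pow (by positivity) hmn⟩
  have hqR : 5 * (r + 1) ≤ R := le_of_pow_le_pow_left₀ hmn hR0 (hr.trans_eq hRX.symm)
  have hM (t : ι → ℂ) (ht : ‖t‖ ≤ R) :=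
    norm_aeval_le_of_norm_le_exp hA hR0 (fun j => hgrow j t R (by linarith) ht) hdeg hN hRX.le
  have hl : ∀ u ∈ w.map v, ‖u‖ ≤ V := by simpa using fun ν _ => hv ν
  have hupper := norm_iterDerivation_le_of_vanishesToOrder_of_coord_mem hV hl hZ hqR hcard
    (by simpa using hw) hM (by simpa using hF) ht
  rw [iterDerivation_map, List.length_map] at hupper
  have hone := one_le_of_one_le_mul_pow_house (by lia) hD (by positivity) hV.le (by positivity)
    hC hC₁ (houseLength_nonneg G) hG hupper h
  rw [← hRX]
  gcongr
  exact le_mul_pow_of_one_le_mul_div_pow (by linarith) (by rw [← hRX]; ring) hone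

theorem exists_apply_notMem_range_algebraMap [Fintype σ]
    (hcard : Fintype.card ι < Fintype.card σ) {v : ι → ι → ℂ}
    (hv : Submodule.span ℂ (Set.range v) = ⊤)
    {g : σ → entireFunctions (ι → ℂ)} {p : ι → σ → MvPolynomial σ (𝓞 K)}
    (hg : ∀ ν j, dirDeriv (v ν) (g j) = aeval g (p ν j))
    (hinj : Function.Injective (aeval (R := 𝓞 K) g)) {A : ℝ} {m : ℕ} (hm : 0 < m) (hA : 0 ≤ A)
    (hgrow : ∀ j t (R : ℝ), 1 ≤ R → ‖t‖ ≤ R → ‖g j t‖ ≤ Real.exp (A * R ^ m)) {Z : Finset ℂ}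
    (hZ : 2 * (Fintype.card ι + 1) *
      (m * (Fintype.card ι + 1) ^ 2 * Module.finrank ℚ K + 1) ≤ Z.card) :
    ∃ j, ∃ t : ι → ℂ, (∀ i, t i ∈ Z) ∧ g j t ∉ Set.range (algebraMap K ℂ) := by
  classical
  by_contra! hmem
  have hZ0 : 0 < Z.card := lt_of_lt_of_le (by positivity) hZ
  have : Nonempty Z := (Finset.card_pos.1 hZ0).to_subtype
  let x (s : ι → Z) : ι → ℂ := fun i => s i
  have hx (s : ι → Z) (j : σ) : g j (x s) ∈ Set.range (algebraMap K ℂ) :=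
    hmem j (x s) fun i => (s i).2
  obtain ⟨C₁, hC₁, haux⟩ :=
    exists_first_nonvanishing_iterDerivation hcard hv hg hinj hx (S := Z.card) (by simp) hZ0
  obtain ⟨C, hC, hliouville⟩ := exists_one_le_norm_iterDerivation_mul hg hx
  obtain ⟨V, hV⟩ := Finite.exists_le fun ν => ‖v ν‖
  obtain ⟨r, hr⟩ := Finite.exists_le fun a : Z => ‖(a : ℂ)‖₊
  obtain ⟨B, hB⟩ := exists_length_le_of_one_le_norm_iterDerivation_mul (K := K) hm
    Module.finrank_pos hA (zero_le_one.trans hC) (zero_le_one.trans hC₁) hgrow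
    (lt_max_of_lt_left one_pos) (fun ν => (hV ν).trans (le_max_right 1 V))
    (fun a ha => hr ⟨a, ha⟩) hZ
  obtain ⟨N, hN⟩ := exists_nat_gt
    (max B (max (2 * Z.card + 2 * (Fintype.card ι + 1) : ℕ)
      ((5 * (r + 1 : ℝ)) ^ (m * (Fintype.card ι + 1)))))
  simp only [max_lt_iff, Nat.cast_lt] at hN
  obtain ⟨hBN, hZN, hrN⟩ := hN
  obtain ⟨G, s, w, hw, hdeg, hG, hne, hF⟩ := haux N (by lia)
  have hNw : N ≤ w.length := (Nat.le_self_pow (by lia) N).trans hw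
  have hNw' : (N : ℝ) ≤ w.length := Nat.cast_le.2 hNw
  have hdegw : G.totalDegree ≤ (Fintype.card σ + 1) * w.length :=
    calc G.totalDegree ≤ Fintype.card σ * (2 * Z.card * N ^ Fintype.card ι) := hdeg
      _ ≤ Fintype.card σ * N ^ (Fintype.card ι + 1) := by rw [pow_succ']; gcongr; lia
      _ ≤ (Fintype.card σ + 1) * w.length := by gcongr; lia
  have ht : ‖x s‖ ≤ r := (pi_norm_le_iff_of_nonneg r.2).2 fun i => hr (s i)
  refine (hBN.trans_le hNw').not_ge <| hB w N G (x s) (by lia) (hrN.le.trans hNw') hw hdeg hG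
    (fun t ht => hF fun i => ⟨t i, ht i⟩) ht ?_
  exact hliouville s w G _ hdegw (Nat.le_mul_of_pos_left _ (by lia)) hne

end entireFunctions

end Normalised

/-! ### Reduction to normalised data -/

section Reduction

open NumberField MvPolynomial

theorem exists_C_mul_eq_map_ringOfIntegers {K σ ι : Type*} [Field K] [NumberField K] [Finite ι]
    (P : ι → MvPolynomial σ K) :
    ∃ b : 𝓞 K, b ≠ 0 ∧ ∃ p : ι → MvPolynomial σ (𝓞 K), ∀ i,
      map (algebraMap (𝓞 K) K) (p i) = C (b : K) * P i := by
  obtain ⟨b, hb⟩ := IsLocalization.exist_integer_multiples_of_finite (nonZeroDivisors (𝓞 K))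
    (fun q : Σ i, (P i).support => coeff q.2 (P q.1))
  choose a ha using hb
  refine ⟨b, nonZeroDivisors.coe_ne_zero b,
    fun i => ∑ u : (P i).support, monomial (u : σ →₀ ℕ) (a ⟨i, u⟩), fun i => ?_⟩
  conv_rhs => rw [(P i).as_sum, Finset.mul_sum, ← Finset.sum_coe_sort]
  rw [map_sum]
  refine Finset.sum_congr rfl fun u _ => ?_
  rw [map_monomial, C_mul_monomial, ha, Algebra.smul_def]

theorem norm_le_polydiscSup {n : ℕ} {f : (Fin n → ℂ) → ℂ} (hf : Continuous f) {z : Fin n → ℂ}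
    {R : ℝ} (hz : ∀ i, ‖z i‖ ≤ R) : ‖f z‖ ≤ PolydiscSup n f R := by
  have hcompact : IsCompact {z : Fin n → ℂ | ∀ i, ‖z i‖ ≤ R} := by
    simpa [Set.pi] using isCompact_univ_pi fun _ : Fin n => isCompact_closedBall (0 : ℂ) R
  exact le_csSup (hcompact.bddAbove_image hf.norm.continuousOn) ⟨z, hz, rfl⟩

theorem exists_norm_le_exp_of_hasFiniteOrderGrowthN {n : ℕ} {f : (Fin n → ℂ) → ℂ}
    (hgrow : HasFiniteOrderGrowthN n f) (hf : Continuous f) :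
    ∃ (A : ℝ) (m₀ : ℕ), 0 ≤ A ∧ ∀ m ≥ m₀, ∀ (t : Fin n → ℂ) (R : ℝ), 1 ≤ R → ‖t‖ ≤ R →
      ‖f t‖ ≤ Real.exp (A * R ^ m) := by
  obtain ⟨ρ, -, h⟩ := hgrow
  obtain ⟨R₀, hR₀⟩ := h 1 one_pos
  have hlarge (t : Fin n → ℂ) (R : ℝ) (hR : max R₀ 1 ≤ R) (ht : ‖t‖ ≤ R) :
      ‖f t‖ ≤ Real.exp (R ^ ⌈ρ + 1⌉₊) := by
    refine (norm_le_polydiscSup hf fun i => (norm_le_pi_norm t i).trans ht).trans ?_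
    refine (hR₀ R (le_of_max_le_left hR)).trans (Real.exp_le_exp.2 ?_)
    rw [← Real.rpow_natCast]
    exact Real.rpow_le_rpow_of_exponent_le (le_of_max_le_right hR) (Nat.le_ceil _)
  refine ⟨max R₀ 1 ^ ⌈ρ + 1⌉₊, ⌈ρ + 1⌉₊, by positivity, fun m hm t R hR ht => ?_⟩
  rcases le_total (max R₀ 1) R with hle | hle
  · refine (hlarge t R hle ht).trans (Real.exp_le_exp.2 ?_)
    calc R ^ ⌈ρ + 1⌉₊ ≤ R ^ m := pow_le_pow_right₀ hR hm
      _ ≤ max R₀ 1 ^ ⌈ρ + 1⌉₊ * R ^ m :=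
        le_mul_of_one_le_left (by positivity) (one_le_pow₀ (le_max_right _ _))
  · refine (hlarge t _ le_rfl (ht.trans hle)).trans (Real.exp_le_exp.2 ?_)
    exact le_mul_of_one_le_right (by positivity) (one_le_pow₀ hR)

theorem exists_uniform_norm_le_exp {n : ℕ} {σ : Type*} [Finite σ] {f : σ → (Fin n → ℂ) → ℂ}
    (hgrow : ∀ i, HasFiniteOrderGrowthN n (f i)) (hf : ∀ i, Continuous (f i)) :
    ∃ (A : ℝ) (m : ℕ), 0 ≤ A ∧ 0 < m ∧ ∀ i (t : Fin n → ℂ) (R : ℝ), 1 ≤ R → ‖t‖ ≤ R →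
      ‖f i t‖ ≤ Real.exp (A * R ^ m) := by
  have := Fintype.ofFinite σ
  choose A m hA hAm using fun i => exists_norm_le_exp_of_hasFiniteOrderGrowthN (hgrow i) (hf i)
  refine ⟨∑ i, A i, ∑ i, m i + 1, Finset.sum_nonneg fun i _ => hA i, Nat.succ_pos _,
    fun i t R hR ht => ?_⟩
  have hmi : m i ≤ ∑ i, m i + 1 :=
    (Finset.single_le_sum (fun _ _ => Nat.zero_le _) (Finset.mem_univ i)).trans (Nat.le_succ _)
  have hAi : A i ≤ ∑ i, A i := Finset.single_le_sum (fun i _ => hA i) (Finset.mem_univ i)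
  refine (hAm i _ hmi t R hR ht).trans (Real.exp_le_exp.2 ?_)
  gcongr

theorem exists_norm_comp_le_exp {E F : Type*} [NormedAddCommGroup E] [NormedSpace ℂ E]
    [NormedAddCommGroup F] [NormedSpace ℂ F] {σ : Type*} {f : σ → F → ℂ} {A : ℝ} {m : ℕ}
    (hA : 0 ≤ A)
    (hgrow : ∀ i t (R : ℝ), 1 ≤ R → ‖t‖ ≤ R → ‖f i t‖ ≤ Real.exp (A * R ^ m)) (Y : E →L[ℂ] F) :
    ∃ B : ℝ, 0 ≤ B ∧ ∀ i t (R : ℝ), 1 ≤ R → ‖t‖ ≤ R → ‖f i (Y t)‖ ≤ Real.exp (B * R ^ m) := by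
  refine ⟨A * max 1 ‖Y‖ ^ m, by positivity, fun i t R hR ht => ?_⟩
  rw [mul_assoc, ← mul_pow]
  refine hgrow i (Y t) _ (one_le_mul_of_one_le_of_one_le (le_max_left _ _) hR) ?_
  calc ‖Y t‖ ≤ ‖Y‖ * ‖t‖ := Y.le_opNorm t
    _ ≤ max 1 ‖Y‖ * R := by
      gcongr
      exact le_max_right _ _

theorem entireFunctions.injective_aeval_of_apply_eq {K σ E F : Type*} [Field K] [Algebra K ℂ]
    [NormedAddCommGroup E] [NormedSpace ℂ E] {f : σ → F → ℂ}
    (hindep : ∀ G : MvPolynomial σ K, (∀ z, aeval (fun i => f i z) G = 0) → G = 0) {Y : E → F}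
    (hY : Function.Surjective Y) {g : σ → entireFunctions E} (hg : ∀ i t, g i t = f i (Y t)) :
    Function.Injective (aeval (R := 𝓞 K) g) := by
  refine (injective_iff_map_eq_zero _).2 fun G hG => ?_
  refine map_injective _ (FaithfulSMul.algebraMap_injective (𝓞 K) K) ?_
  rw [map_zero]
  refine hindep _ (hY.forall.2 fun t => ?_)
  calc aeval (fun i => f i (Y t)) (map (algebraMap (𝓞 K) K) G)
      = aeval (fun i => g i t) G := by simp only [hg, aeval_map_algebraMap]
    _ = (aeval g G : entireFunctions E) t := (entireFunctions.aeval_apply g G t).symm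
    _ = 0 := congrFun (congrArg Subtype.val hG) t

theorem exists_apply_sum_smul_notMem_range_algebraMap {K σ ι : Type*} [Field K] [NumberField K]
    [Algebra K ℂ] [Fintype ι] [DecidableEq ι] [Fintype σ]
    (hcard : Fintype.card ι < Fintype.card σ)
    {f : σ → (ι → ℂ) → ℂ} (hf : ∀ i, Differentiable ℂ (f i)) {A : ℝ} {m : ℕ} (hA : 0 ≤ A)
    (hm : 0 < m)
    (hgrow : ∀ i t (R : ℝ), 1 ≤ R → ‖t‖ ≤ R → ‖f i t‖ ≤ Real.exp (A * R ^ m))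
    (hindep : ∀ G : MvPolynomial σ K, (∀ z, aeval (fun i => f i z) G = 0) → G = 0)
    {P : ι → σ → MvPolynomial σ K}
    (hP : ∀ ν i z, fderiv ℂ (f i) z (Pi.single ν 1) = aeval (fun j => f j z) (P ν i))
    {y : ι → ι → ℂ} (hy : LinearIndependent ℂ y) {Z : Finset ℂ}
    (hZ : 2 * (Fintype.card ι + 1) *
      (m * (Fintype.card ι + 1) ^ 2 * Module.finrank ℚ K + 1) ≤ Z.card) :
    ∃ i, ∃ s : ι → ℂ, (∀ ν, s ν ∈ Z) ∧ f i (∑ ν, s ν • y ν) ∉ Set.range (algebraMap K ℂ) := by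
  obtain ⟨b, hb, p, hp⟩ := exists_C_mul_eq_map_ringOfIntegers fun q : ι × σ => P q.1 q.2
  have hbℂ : IsUnit (algebraMap (𝓞 K) ℂ b) := by simpa using hb
  let basis := basisOfLinearIndependentOfCardEqFinrank' y hy (by simp)
  let Y : (ι → ℂ) ≃L[ℂ] (ι → ℂ) := basis.equivFun.symm.toContinuousLinearEquiv
  have hY (t : ι → ℂ) : Y t = ∑ ν, t ν • y ν := by simp [Y, basis, Module.Basis.equivFun_symm_apply]
  obtain ⟨B, hB, hgrowY⟩ := exists_norm_comp_le_exp hA hgrow (Y : (ι → ℂ) →L[ℂ] (ι → ℂ))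
  let v := ((Pi.basisFun ℂ ι).map Y.symm.toLinearEquiv).isUnitSMul (fun _ => hbℂ)
  let g (j : σ) : entireFunctions (ι → ℂ) := ⟨fun t => f j (Y t),
    (entireFunctions.contDiff_of_fderiv_eq_aeval (Pi.basisFun ℂ ι) hf (by simpa using hP) j).comp
      Y.contDiff⟩
  have hg (ν : ι) (j : σ) : entireFunctions.dirDeriv (v ν) (g j) = aeval g (p (ν, j)) := by
    refine Subtype.ext (funext fun t => ?_)
    calc fderiv ℂ (f j ∘ Y) t (v ν)
        = b • fderiv ℂ (f j) (Y t) (Pi.single ν 1) := by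
          simp [Y.comp_right_fderiv, v, Module.Basis.isUnitSMul_apply]
      _ = aeval (fun i => f i (Y t)) (map (algebraMap (𝓞 K) K) (p (ν, j))) := by
          rw [hp, hP, map_mul, aeval_C, Algebra.smul_def]
          rfl
      _ = aeval (fun i => f i (Y t)) (p (ν, j)) := aeval_map_algebraMap ..
      _ = (aeval g (p (ν, j)) : entireFunctions (ι → ℂ)) t :=
          (entireFunctions.aeval_apply g _ t).symm
  have hinj : Function.Injective (aeval (R := 𝓞 K) g) :=
    entireFunctions.injective_aeval_of_apply_eq hindep Y.surjective fun _ _ => rfl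
  simpa only [← hY] using
    entireFunctions.exists_apply_notMem_range_algebraMap hcard v.span_eq hg hinj hm hB hgrowY hZ

theorem exists_map_algebraMap_eq_of_coeff_mem {σ F : Type*} [Field F] {K : Subfield F}
    {P : MvPolynomial σ F} (hP : ∀ u, coeff u P ∈ K) :
    ∃ Q : MvPolynomial σ K, map (algebraMap K F) Q = P := by
  refine mem_range_map_iff_coeffs_subset.2 fun c hc => ?_
  obtain ⟨u, -, rfl⟩ := mem_coeffs_iff.1 hc
  exact ⟨⟨_, hP u⟩, rfl⟩

end Reduction

theorem schneider_lang_several_variables_general {n d : ℕ} (hnd : n < d)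
    (K : Subfield ℂ) [FiniteDimensional ℚ K] {f : Fin d → (Fin n → ℂ) → ℂ}
    (hent : ∀ i, Differentiable ℂ (f i))
    (horder : ∀ i, HasFiniteOrderGrowthN n (f i))
    (halgind : ∀ P : MvPolynomial (Fin d) ℂ, (∀ m, MvPolynomial.coeff m P ∈ K) →
      (∀ z : Fin n → ℂ, MvPolynomial.eval (fun i => f i z) P = 0) → P = 0)
    (hdiff : ∀ (ν : Fin n) (i : Fin d), ∃ P : MvPolynomial (Fin d) ℂ,
      (∀ m, MvPolynomial.coeff m P ∈ K) ∧
      ∀ z : Fin n → ℂ, fderiv ℂ (f i) z (Pi.single ν 1) =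
        MvPolynomial.eval (fun j => f j z) P) :
    ∃ S : ℕ, ∀ y : Fin n → Fin n → ℂ, LinearIndependent ℂ y → ∀ Z : Finset ℂ, S ≤ Z.card →
      ∃ i, ∃ s : Fin n → ℂ, (∀ ν, s ν ∈ Z) ∧ f i (∑ ν, s ν • y ν) ∉ K := by
  have : NumberField K := {}
  obtain ⟨A, m, hA, hm, hgrow⟩ := exists_uniform_norm_le_exp horder fun i => (hent i).continuous
  have hindep (G : MvPolynomial (Fin d) K)
      (hG : ∀ z, MvPolynomial.aeval (fun i => f i z) G = 0) : G = 0 := by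
    refine MvPolynomial.map_injective _ (algebraMap K ℂ).injective ?_
    rw [map_zero]
    refine halgind _ (fun u => ?_) fun z => (MvPolynomial.eval_map ..).trans (hG z)
    exact MvPolynomial.coeff_map (algebraMap K ℂ) G u ▸ Subtype.property _
  choose P hPK hP using hdiff
  choose Q hQ using fun ν i => exists_map_algebraMap_eq_of_coeff_mem (hPK ν i)
  refine ⟨2 * (n + 1) * (m * (n + 1) ^ 2 * Module.finrank ℚ K + 1), fun y hy Z hZ => ?_⟩
  obtain ⟨i, s, hs, hi⟩ := exists_apply_sum_smul_notMem_range_algebraMap (by simpa using hnd) hent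
    hA hm hgrow hindep (P := Q)
    (fun ν i z => by rw [hP, ← hQ, MvPolynomial.eval_map, MvPolynomial.aeval_def]) hy
    (by simpa using hZ)
  exact ⟨i, s, hs, fun h => hi ⟨⟨_, h⟩, rfl⟩⟩

/-- **Schneider–Lang Criterion in several variables.** Let `d > n ≥ 1`, `K ⊆ ℂ` a
number field, `f₁, …, f_d` algebraically independent entire functions on `ℂ^n` of
finite order of growth, whose partial derivatives `(∂/∂z_ν) f_i` belong to
`K[f₁, …, f_d]`. Let `(y₁, …, y_n)` be a basis of `ℂ^n` over `ℂ`. Then the numbers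
`f_i(s₁ y₁ + ⋯ + s_n y_n)`, for `1 ≤ i ≤ d` and `s ∈ ℤ^n`, do not all lie in `K`. -/
theorem schneider_lang_several_variables
    (n d : ℕ) (hn : 1 ≤ n) (hnd : n < d)
    (K : Subfield ℂ) (hK : FiniteDimensional ℚ K)
    (f : Fin d → (Fin n → ℂ) → ℂ)
    (hent : ∀ i, Differentiable ℂ (f i))
    (horder : ∀ i, HasFiniteOrderGrowthN n (f i))
    (halgind : ∀ P : MvPolynomial (Fin d) ℂ, (∀ m, MvPolynomial.coeff m P ∈ K) →
      (∀ z : Fin n → ℂ, MvPolynomial.eval (fun i => f i z) P = 0) → P = 0)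
    (hdiff : ∀ (ν : Fin n) (i : Fin d), ∃ P : MvPolynomial (Fin d) ℂ,
      (∀ m, MvPolynomial.coeff m P ∈ K) ∧
      ∀ z : Fin n → ℂ, fderiv ℂ (f i) z (Pi.single ν 1) =
        MvPolynomial.eval (fun j => f j z) P)
    (y : Fin n → Fin n → ℂ)
    (hy : LinearIndependent ℂ y)
    (hspan : Submodule.span ℂ (Set.range y) = ⊤) :
    ¬ ∀ (i : Fin d) (s : Fin n → ℤ), f i (∑ ν, (s ν : ℂ) • y ν) ∈ K := by
  intro hmem
  obtain ⟨S, hS⟩ := schneider_lang_several_variables_general hnd K hent horder halgind hdiff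
  obtain ⟨i, s, hs, hi⟩ := hS y hy ((Finset.range S).map Nat.castEmbedding) (by simp)
  simp only [Finset.mem_map, Nat.castEmbedding_apply] at hs
  choose t _ ht using hs
  exact hi (by simpa [← ht] using hmem i fun ν => t ν)
end
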